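/- arXiv:2101.06912 — 4 statements merged into one kernel-verified Lean document; each statement's English description precedes it below -/
import Mathlib

section
/- Let (R_i)_{i∈I} be a generic rectangular tiling of a rectangle F. Then (R_i)_{i∈I} is area-universal if and only if every maximal internal line segment of the tiling is equal to a side of at least one of the rectangles R_i. -/
/-!
Why the theorem holds.

Area-universality implies the side condition. Let a maximal segment, say a vertical one, not be a
side of any rectangle. Then it has at least two rectangles on each side, and genericity forces the
lowest horizontal junctions on its two sides to lie at different heights. This produces rectangles
`p`, `q` on opposite sides of the segment such that in every weakly equivalent tiling `p` and `q` are
separated both horizontally and vertically (`side_or_badV`, `BadV.transfer`). If `p` and `q` have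
area `1`, their widths `a`, `c` and heights `b`, `d` satisfy `(a + c) * (b + d) ≥ 4`, which is
impossible once the other areas sum to at most `1` (`not_areaUniversal_of_sep`).

The side condition implies area-universality. The condition makes the tiling one-sided: of any two
sides in contact one contains the other (`oneV_of_sides`). Given areas `w`, maximize
`∏ i, (r i - l i) ^ w i` over all horizontal coordinates `l`, `r` that respect the vertical contacts
and fix the left and right border. Stationarity at the maximum says that `w i / (r i - l i)` is a
flow from left to right through the rectangles (`exists_flow`), and by planar duality a flow is a
system of heights that comes from vertical coordinates respecting the horizontal contacts
(`exists_dual`). The new rectangles have the prescribed areas. That they form a tiling with the same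
contacts uses one-sidedness: the heights of the rectangles along a side telescope, so at every height
the new rectangles form a chain of neighbours from the left border to the right border
(`cfg_cover`, `cfg_ladj_iff`).

Both parts are carried out for coordinate functions (`Til`), where exchanging and reflecting the
axes reduces the case distinctions to one orientation.
-/

open Set

/-- An axis-parallel rectangle `[x1,x2] × [y1,y2]` with `x1 < x2` and `y1 < y2`. -/
structure Rect where
  x1 : ℝ
  x2 : ℝ
  y1 : ℝ
  y2 : ℝ
  hx : x1 < x2
  hy : y1 < y2

namespace Rect

/-- The rectangle as a subset of the plane. -/
def toSet (R : Rect) : Set (ℝ × ℝ) := Set.Icc R.x1 R.x2 ×ˢ Set.Icc R.y1 R.y2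

/-- The area of the rectangle. -/
noncomputable def area (R : Rect) : ℝ := (R.x2 - R.x1) * (R.y2 - R.y1)

end Rect

/-- Vertical closed segment `{x} × [c,d]`. -/
def vseg (x c d : ℝ) : Set (ℝ × ℝ) := ({x} : Set ℝ) ×ˢ Set.Icc c d

/-- Horizontal closed segment `[a,b] × {y}`. -/
def hseg (a b y : ℝ) : Set (ℝ × ℝ) := Set.Icc a b ×ˢ ({y} : Set ℝ)

/-- Relative interior of a vertical segment. -/
def vsegOpen (x c d : ℝ) : Set (ℝ × ℝ) := ({x} : Set ℝ) ×ˢ Set.Ioo c d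

/-- Relative interior of a horizontal segment. -/
def hsegOpen (a b y : ℝ) : Set (ℝ × ℝ) := Set.Ioo a b ×ˢ ({y} : Set ℝ)

/-- `S` is one of the four sides of the rectangle `R`. -/
def Rect.IsSide (R : Rect) (S : Set (ℝ × ℝ)) : Prop :=
  S = vseg R.x1 R.y1 R.y2 ∨ S = vseg R.x2 R.y1 R.y2 ∨
  S = hseg R.x1 R.x2 R.y1 ∨ S = hseg R.x1 R.x2 R.y2

/-- A rectangular tiling: a finite family of axis-parallel rectangles with pairwise
disjoint interiors whose union is an axis-parallel rectangle `F`. -/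
structure Tiling (I : Type*) [Fintype I] where
  R : I → Rect
  F : Rect
  disj : Pairwise fun i j => interior ((R i).toSet) ∩ interior ((R j).toSet) = ∅
  union : (⋃ i, (R i).toSet) = F.toSet

variable {I : Type*} [Fintype I]

/-- An internal line segment of a tiling: a horizontal or vertical closed segment of
positive length contained in the union of the boundaries of the rectangles, whose
relative interior lies in the topological interior of the bounding rectangle. -/
def IsInternalSeg (T : Tiling I) (S : Set (ℝ × ℝ)) : Prop :=
  (∃ x c d : ℝ, c < d ∧ S = vseg x c d ∧
      S ⊆ (⋃ i, frontier ((T.R i).toSet)) ∧ vsegOpen x c d ⊆ interior T.F.toSet) ∨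
  (∃ a b y : ℝ, a < b ∧ S = hseg a b y ∧
      S ⊆ (⋃ i, frontier ((T.R i).toSet)) ∧ hsegOpen a b y ⊆ interior T.F.toSet)

/-- A maximal internal line segment: an internal segment not properly contained in
any other internal segment. -/
def IsMaxInternalSeg (T : Tiling I) (S : Set (ℝ × ℝ)) : Prop :=
  IsInternalSeg T S ∧ ∀ S', IsInternalSeg T S' → S ⊆ S' → S' = S

/-- `A ∩ B` is a vertical segment of positive length with `A` lying to the left of `B`. -/
def LeftAdj (A B : Rect) : Prop :=
  A.x2 = B.x1 ∧ ∃ c d : ℝ, c < d ∧ A.toSet ∩ B.toSet = vseg A.x2 c d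

/-- `A ∩ B` is a horizontal segment of positive length with `A` lying below `B`. -/
def BelowAdj (A B : Rect) : Prop :=
  A.y2 = B.y1 ∧ ∃ a b : ℝ, a < b ∧ A.toSet ∩ B.toSet = hseg a b A.y2

/-- `A` meets the left side of `F` in a segment of positive length. -/
def MeetsLeftSide (A F : Rect) : Prop :=
  ∃ c d : ℝ, c < d ∧ A.toSet ∩ vseg F.x1 F.y1 F.y2 = vseg F.x1 c d

/-- `A` meets the right side of `F` in a segment of positive length. -/
def MeetsRightSide (A F : Rect) : Prop :=
  ∃ c d : ℝ, c < d ∧ A.toSet ∩ vseg F.x2 F.y1 F.y2 = vseg F.x2 c d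

/-- `A` meets the bottom side of `F` in a segment of positive length. -/
def MeetsBottomSide (A F : Rect) : Prop :=
  ∃ a b : ℝ, a < b ∧ A.toSet ∩ hseg F.x1 F.x2 F.y1 = hseg a b F.y1

/-- `A` meets the top side of `F` in a segment of positive length. -/
def MeetsTopSide (A F : Rect) : Prop :=
  ∃ a b : ℝ, a < b ∧ A.toSet ∩ hseg F.x1 F.x2 F.y2 = hseg a b F.y2

/-- Two tilings indexed by the same finite set are weakly equivalent. -/
def WeakEquiv (T T' : Tiling I) : Prop :=
  (∀ i j : I, LeftAdj (T.R i) (T.R j) ↔ LeftAdj (T'.R i) (T'.R j)) ∧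
  (∀ i j : I, BelowAdj (T.R i) (T.R j) ↔ BelowAdj (T'.R i) (T'.R j)) ∧
  (∀ i : I, MeetsLeftSide (T.R i) T.F ↔ MeetsLeftSide (T'.R i) T'.F) ∧
  (∀ i : I, MeetsRightSide (T.R i) T.F ↔ MeetsRightSide (T'.R i) T'.F) ∧
  (∀ i : I, MeetsTopSide (T.R i) T.F ↔ MeetsTopSide (T'.R i) T'.F) ∧
  (∀ i : I, MeetsBottomSide (T.R i) T.F ↔ MeetsBottomSide (T'.R i) T'.F)

/-- A tiling is area-universal if every assignment of positive areas to the rectangles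
is realized by a weakly equivalent tiling. -/
def AreaUniversal (T : Tiling I) : Prop :=
  ∀ w : I → ℝ, (∀ i, 0 < w i) → ∃ T' : Tiling I, WeakEquiv T T' ∧ ∀ i, (T'.R i).area = w i

/-- A tiling is generic if no point belongs to four or more of the rectangles. -/
def Generic (T : Tiling I) : Prop :=
  ∀ p : ℝ × ℝ, ∀ s : Finset I, (∀ i ∈ s, p ∈ (T.R i).toSet) → s.card ≤ 3

/-- A side-attachment sequence: rectangles with pairwise disjoint interiors such that
every partial union `U_j = R_0 ∪ ⋯ ∪ R_j` is an axis-parallel rectangle. -/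
def SideAttachSeq {n : ℕ} (R : Fin n → Rect) : Prop :=
  (Pairwise fun i j => interior ((R i).toSet) ∩ interior ((R j).toSet) = ∅) ∧
  ∀ j : Fin n, ∃ U : Rect, (⋃ i ∈ Set.Iic j, (R i).toSet) = U.toSet

/-! ### Coordinate form of a tiling -/

/-- A rectangular tiling given by coordinate functions: the rectangle `i` is
`[xl i, xr i] × [yb i, yt i]`, the bounding rectangle is `[X1, X2] × [Y1, Y2]`. The covering
property is recorded for each of the four half-open versions of the rectangles, the fields
`ne`, `nw`, `se`, `sw` being named after the quadrant at `(x, y)` that the rectangle contains. -/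
structure Til {I : Type*} (xl xr yb yt : I → ℝ) (X1 X2 Y1 Y2 : ℝ) : Prop where
  hX : X1 < X2
  hY : Y1 < Y2
  hx : ∀ i, xl i < xr i
  hy : ∀ i, yb i < yt i
  bl : ∀ i, X1 ≤ xl i
  br : ∀ i, xr i ≤ X2
  bb : ∀ i, Y1 ≤ yb i
  bt : ∀ i, yt i ≤ Y2
  disj : ∀ i j, xl i < xr j → xl j < xr i → yb i < yt j → yb j < yt i → i = j
  ne : ∀ x y, X1 ≤ x → x < X2 → Y1 ≤ y → y < Y2 →
    ∃ i, xl i ≤ x ∧ x < xr i ∧ yb i ≤ y ∧ y < yt i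
  nw : ∀ x y, X1 < x → x ≤ X2 → Y1 ≤ y → y < Y2 →
    ∃ i, xl i < x ∧ x ≤ xr i ∧ yb i ≤ y ∧ y < yt i
  se : ∀ x y, X1 ≤ x → x < X2 → Y1 < y → y ≤ Y2 →
    ∃ i, xl i ≤ x ∧ x < xr i ∧ yb i < y ∧ y ≤ yt i
  sw : ∀ x y, X1 < x → x ≤ X2 → Y1 < y → y ≤ Y2 →
    ∃ i, xl i < x ∧ x ≤ xr i ∧ yb i < y ∧ y ≤ yt i

/-- No point lies in four pairwise distinct rectangles. -/
def Gen {I : Type*} (xl xr yb yt : I → ℝ) : Prop :=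
  ∀ (x y : ℝ) (i j k l : I), i ≠ j → i ≠ k → i ≠ l → j ≠ k → j ≠ l → k ≠ l →
    (∀ m, m = i ∨ m = j ∨ m = k ∨ m = l → xl m ≤ x ∧ x ≤ xr m ∧ yb m ≤ y ∧ y ≤ yt m) → False

/-- The rectangle `i` is left of `j` and they share a vertical segment of positive length. With
the roles of the axes exchanged, `LAdj yb yt xl xr i j` says that `i` is below `j`. -/
def LAdj {I : Type*} (xl xr yb yt : I → ℝ) (i j : I) : Prop :=
  xr i = xl j ∧ yb i < yt j ∧ yb j < yt i

/-- Whenever `i` is left of `j`, one of the two sides in contact contains the other. -/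
def OneV {I : Type*} (xl xr yb yt : I → ℝ) : Prop :=
  ∀ i j, LAdj xl xr yb yt i j →
    (yb i ≤ yb j ∧ yt j ≤ yt i) ∨ (yb j ≤ yb i ∧ yt i ≤ yt j)

/-- New horizontal coordinates `l`, `r` for the rectangles which respect the vertical contacts of
the tiling and send its left and right border to `L` and `R`. -/
structure Cfg {I : Type*} (xl xr yb yt : I → ℝ) (X1 X2 : ℝ) (l r : I → ℝ) (L R : ℝ) : Prop where
  pos : ∀ i, l i < r i
  adj : ∀ i j, LAdj xl xr yb yt i j → r i = l j
  left : ∀ i, xl i = X1 → l i = L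
  right : ∀ i, xr i = X2 → r i = R

section Abstract

variable {I : Type*} {xl xr yb yt : I → ℝ} {X1 X2 Y1 Y2 : ℝ}

/-! ### Symmetries -/

theorem Til.swap (h : Til xl xr yb yt X1 X2 Y1 Y2) : Til yb yt xl xr Y1 Y2 X1 X2 where
  hX := h.hY
  hY := h.hX
  hx := h.hy
  hy := h.hx
  bl := h.bb
  br := h.bt
  bb := h.bl
  bt := h.br
  disj i j a b c d := h.disj i j c d a b
  ne x y a b c d := by
    obtain ⟨i, p, q, r, s⟩ := h.ne y x c d a b
    exact ⟨i, r, s, p, q⟩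
  nw x y a b c d := by
    obtain ⟨i, p, q, r, s⟩ := h.se y x c d a b
    exact ⟨i, r, s, p, q⟩
  se x y a b c d := by
    obtain ⟨i, p, q, r, s⟩ := h.nw y x c d a b
    exact ⟨i, r, s, p, q⟩
  sw x y a b c d := by
    obtain ⟨i, p, q, r, s⟩ := h.sw y x c d a b
    exact ⟨i, r, s, p, q⟩

/-- Reflection in the vertical axis. -/
theorem Til.negx (h : Til xl xr yb yt X1 X2 Y1 Y2) :
    Til (fun i => -xr i) (fun i => -xl i) yb yt (-X2) (-X1) Y1 Y2 where
  hX := neg_lt_neg h.hX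
  hY := h.hY
  hx i := neg_lt_neg (h.hx i)
  hy := h.hy
  bl i := neg_le_neg (h.br i)
  br i := neg_le_neg (h.bl i)
  bb := h.bb
  bt := h.bt
  disj i j a b c d := h.disj i j (by linarith) (by linarith) c d
  ne x y a b c d := by
    obtain ⟨i, p, q, r, s⟩ := h.nw (-x) y (by linarith) (by linarith) c d
    exact ⟨i, by linarith, by linarith, r, s⟩
  nw x y a b c d := by
    obtain ⟨i, p, q, r, s⟩ := h.ne (-x) y (by linarith) (by linarith) c d
    exact ⟨i, by linarith, by linarith, r, s⟩
  se x y a b c d := by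
    obtain ⟨i, p, q, r, s⟩ := h.sw (-x) y (by linarith) (by linarith) c d
    exact ⟨i, by linarith, by linarith, r, s⟩
  sw x y a b c d := by
    obtain ⟨i, p, q, r, s⟩ := h.se (-x) y (by linarith) (by linarith) c d
    exact ⟨i, by linarith, by linarith, r, s⟩

/-- Reflection in the horizontal axis. -/
theorem Til.negy (h : Til xl xr yb yt X1 X2 Y1 Y2) :
    Til xl xr (fun i => -yt i) (fun i => -yb i) X1 X2 (-Y2) (-Y1) :=
  h.swap.negx.swap

theorem Gen.swap (h : Gen xl xr yb yt) : Gen yb yt xl xr := by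
  intro x y i j k l h1 h2 h3 h4 h5 h6 hm
  refine h y x i j k l h1 h2 h3 h4 h5 h6 fun m hm' => ?_
  obtain ⟨a, b, c, d⟩ := hm m hm'
  exact ⟨c, d, a, b⟩

theorem Gen.negx (h : Gen xl xr yb yt) : Gen (fun i => -xr i) (fun i => -xl i) yb yt := by
  intro x y i j k l h1 h2 h3 h4 h5 h6 hm
  refine h (-x) y i j k l h1 h2 h3 h4 h5 h6 fun m hm' => ?_
  obtain ⟨a, b, c, d⟩ := hm m hm'
  exact ⟨by linarith, by linarith, c, d⟩

theorem Gen.negy (h : Gen xl xr yb yt) : Gen xl xr (fun i => -yt i) (fun i => -yb i) :=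
  h.swap.negx.swap

theorem ladj_negx {i j : I} :
    LAdj (fun i => -xr i) (fun i => -xl i) yb yt i j ↔ LAdj xl xr yb yt j i := by
  constructor
  · rintro ⟨a, b, c⟩
    exact ⟨by linarith, c, b⟩
  · rintro ⟨a, b, c⟩
    exact ⟨by linarith, c, b⟩

theorem ladj_negy {i j : I} :
    LAdj xl xr (fun i => -yt i) (fun i => -yb i) i j ↔ LAdj xl xr yb yt i j := by
  constructor
  · rintro ⟨a, b, c⟩
    exact ⟨a, by linarith, by linarith⟩
  · rintro ⟨a, b, c⟩
    exact ⟨a, by linarith, by linarith⟩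

theorem OneV.negx (h : OneV xl xr yb yt) : OneV (fun i => -xr i) (fun i => -xl i) yb yt := by
  intro i j hij
  rcases h j i (ladj_negx.1 hij) with h | h
  · exact Or.inr h
  · exact Or.inl h

/-- Horizontal coordinates survive a reflection in the horizontal axis. -/
theorem Cfg.negy {l r : I → ℝ} {L R : ℝ} (h : Cfg xl xr yb yt X1 X2 l r L R) :
    Cfg xl xr (fun i => -yt i) (fun i => -yb i) X1 X2 l r L R where
  pos := h.pos
  adj i j hij := h.adj i j (ladj_negy.1 hij)
  left := h.left
  right := h.right

theorem Cfg.negx {l r : I → ℝ} {L R : ℝ} (h : Cfg xl xr yb yt X1 X2 l r L R) :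
    Cfg (fun i => -xr i) (fun i => -xl i) yb yt (-X2) (-X1)
      (fun i => -r i) (fun i => -l i) (-R) (-L) where
  pos i := neg_lt_neg (h.pos i)
  adj i j hij := congrArg Neg.neg (h.adj j i (ladj_negx.1 hij)).symm
  left i hi := congrArg Neg.neg (h.right i (neg_injective hi))
  right i hi := congrArg Neg.neg (h.left i (neg_injective hi))

/-! ### Neighbours -/

/-- At a common bottom corner of two horizontally adjacent rectangles, genericity forces a single
rectangle below both, so the bottom coordinates still agree in every configuration. -/
theorem corner_bot (h : Til xl xr yb yt X1 X2 Y1 Y2) (g : Gen xl xr yb yt) {b t : I → ℝ} {B T : ℝ}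
    (hc : Cfg yb yt xl xr Y1 Y2 b t B T) {i j : I} (hij : LAdj xl xr yb yt i j)
    (e : yb i = yb j) : b i = b j := by
  obtain ⟨e1, e2, e3⟩ := hij
  rcases (h.bb i).eq_or_lt with hb | hb
  · rw [hc.left i hb.symm, hc.left j (e ▸ hb.symm)]
  have hi := h.hx i
  have hj := h.hx j
  have hi' := h.hy i
  have hj' := h.hy j
  have b1 := h.bl i
  have b2 := h.br j
  have b3 := h.bt i
  obtain ⟨c, c1, c2, c3, c4⟩ := h.se (xr i) (yb i) (by linarith) (by linarith) hb (by linarith)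
  obtain ⟨d, d1, d2, d3, d4⟩ := h.sw (xr i) (yb i) (by linarith) (by linarith) hb (by linarith)
  have hcd : c = d := by
    by_contra hne
    refine g (xr i) (yb i) i j c d ?_ ?_ ?_ ?_ ?_ hne ?_
    · rintro rfl; linarith
    · rintro rfl; linarith
    · rintro rfl; linarith
    · rintro rfl; linarith
    · rintro rfl; linarith
    · rintro m (rfl | rfl | rfl | rfl) <;> refine ⟨?_, ?_, ?_, ?_⟩ <;> linarith
  subst hcd
  have hy : yt c = yb i := by
    by_contra hne
    have hlt : yb i < yt c := lt_of_le_of_ne d4 (Ne.symm hne)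
    have := h.disj c i (by linarith) (by linarith) (by linarith) (by linarith)
    subst this
    linarith
  rw [← hc.adj c i ⟨hy, by linarith, by linarith⟩, ← hc.adj c j ⟨by linarith, by linarith, by linarith⟩]

theorem corner_top (h : Til xl xr yb yt X1 X2 Y1 Y2) (g : Gen xl xr yb yt) {b t : I → ℝ} {B T : ℝ}
    (hc : Cfg yb yt xl xr Y1 Y2 b t B T) {i j : I} (hij : LAdj xl xr yb yt i j)
    (e : yt i = yt j) : t i = t j :=
  neg_injective (corner_bot h.negy g.negy hc.negx (ladj_negy.2 hij) (congrArg Neg.neg e))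

theorem right_ne (h : Til xl xr yb yt X1 X2 Y1 Y2) {i : I} (hi : xr i < X2) {y : ℝ}
    (h1 : yb i ≤ y) (h2 : y < yt i) : ∃ k, LAdj xl xr yb yt i k ∧ yb k ≤ y ∧ y < yt k := by
  have b1 := h.bl i
  have b2 := h.hx i
  have b3 := h.bb i
  have b4 := h.bt i
  obtain ⟨k, k1, k2, k3, k4⟩ := h.ne (xr i) y (by linarith) hi (by linarith) (by linarith)
  refine ⟨k, ⟨?_, by linarith, by linarith⟩, k3, k4⟩
  by_contra hne
  have hlt : xl k < xr i := lt_of_le_of_ne k1 (Ne.symm hne)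
  have := h.disj i k (by linarith) hlt (by linarith) (by linarith)
  subst this
  linarith

theorem right_se (h : Til xl xr yb yt X1 X2 Y1 Y2) {i : I} (hi : xr i < X2) {y : ℝ}
    (h1 : yb i < y) (h2 : y ≤ yt i) : ∃ k, LAdj xl xr yb yt i k ∧ yb k < y ∧ y ≤ yt k := by
  obtain ⟨k, k1, k2, k3⟩ := right_ne h.negy (i := i) hi (y := -y) (by linarith) (by linarith)
  exact ⟨k, ladj_negy.1 k1, by linarith, by linarith⟩

theorem exists_left (h : Til xl xr yb yt X1 X2 Y1 Y2) {i : I} (hi : X1 < xl i) :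
    ∃ k, LAdj xl xr yb yt k i := by
  obtain ⟨k, hk, -⟩ := right_ne h.negx (i := i) (neg_lt_neg hi) le_rfl (h.hy i)
  exact ⟨k, ladj_negx.1 hk⟩

/-! ### Telescoping sums along stacks of rectangles -/

/-- Telescoping along a finite chain ordered by a successor relation `S`. -/
theorem chain_sum (N : Finset I) (S : I → I → Prop) (Bot Top : I → Prop) (lo hi : I → ℝ) {β τ : ℝ}
    (hB : ∃ j ∈ N, Bot j) (hBu : ∀ j ∈ N, ∀ k ∈ N, Bot j → Bot k → j = k)
    (hBlo : ∀ j ∈ N, Bot j → lo j = β)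
    (hT : ∃ j ∈ N, Top j) (hTu : ∀ j ∈ N, ∀ k ∈ N, Top j → Top k → j = k)
    (hThi : ∀ j ∈ N, Top j → hi j = τ)
    (hS : ∀ j ∈ N, ∀ k ∈ N, S j k → hi j = lo k)
    (hnext : ∀ j ∈ N, ¬ Top j → ∃ k ∈ N, S j k ∧ ¬ Bot k)
    (hprev : ∀ k ∈ N, ¬ Bot k → ∃ j ∈ N, S j k ∧ ¬ Top j)
    (hu1 : ∀ j ∈ N, ∀ k ∈ N, ∀ k' ∈ N, S j k → S j k' → k = k')
    (hu2 : ∀ j ∈ N, ∀ j' ∈ N, ∀ k ∈ N, S j k → S j' k → j = j') :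
    ∑ j ∈ N, (hi j - lo j) = τ - β := by
  classical
  obtain ⟨jb, jb1, jb2⟩ := hB
  obtain ⟨jt, jt1, jt2⟩ := hT
  have e1 : ∑ j ∈ N.erase jt, hi j = ∑ j ∈ N.erase jb, lo j := by
    have nt : ∀ j, j ∈ N.erase jt → ¬ Top j := fun j hj ht =>
      (Finset.mem_erase.1 hj).1 (hTu _ (Finset.mem_erase.1 hj).2 _ jt1 ht jt2)
    have nb : ∀ j, j ∈ N.erase jb → ¬ Bot j := fun j hj ht =>
      (Finset.mem_erase.1 hj).1 (hBu _ (Finset.mem_erase.1 hj).2 _ jb1 ht jb2)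
    choose! nx n1 n2 n3 using hnext
    refine Finset.sum_bij (fun j _ => nx j) ?_ ?_ ?_ ?_
    · intro j hj
      have hj' := (Finset.mem_erase.1 hj).2
      refine Finset.mem_erase.2 ⟨?_, n1 j hj' (nt j hj)⟩
      rintro e
      exact n3 j hj' (nt j hj) (e ▸ jb2)
    · intro j hj k hk e
      have hj' := (Finset.mem_erase.1 hj).2
      have hk' := (Finset.mem_erase.1 hk).2
      refine hu2 j hj' k hk' (nx j) (n1 j hj' (nt j hj)) (n2 j hj' (nt j hj)) ?_
      have := n2 k hk' (nt k hk)
      rwa [← e] at this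
    · intro k hk
      have hk' := (Finset.mem_erase.1 hk).2
      obtain ⟨j, j1, j2, j3⟩ := hprev k hk' (nb k hk)
      refine ⟨j, Finset.mem_erase.2 ⟨?_, j1⟩, ?_⟩
      · rintro rfl
        exact j3 jt2
      · exact hu1 j j1 _ (n1 j j1 j3) k hk' (n2 j j1 j3) j2
    · intro j hj
      have hj' := (Finset.mem_erase.1 hj).2
      exact hS j hj' _ (n1 j hj' (nt j hj)) (n2 j hj' (nt j hj))
  rw [Finset.sum_sub_distrib, ← Finset.add_sum_erase N hi jt1, ← Finset.add_sum_erase N lo jb1, e1,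
    hThi jt jt1 jt2, hBlo jb jb1 jb2]
  ring

/-- Rectangles with left sides on the line `x = x0` whose left sides fill `{x0} × [C, D]`: the
sums telescope in every configuration. -/
theorem stack_sum (h : Til xl xr yb yt X1 X2 Y1 Y2) {b t : I → ℝ} {B T : ℝ}
    (hc : Cfg yb yt xl xr Y1 Y2 b t B T) (N : Finset I) {x0 C D β τ : ℝ} (hCD : C < D)
    (hN : ∀ j ∈ N, xl j = x0 ∧ C ≤ yb j ∧ yt j ≤ D)
    (c1 : ∀ y, C ≤ y → y < D → ∃ k ∈ N, yb k ≤ y ∧ y < yt k)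
    (c2 : ∀ y, C < y → y ≤ D → ∃ k ∈ N, yb k < y ∧ y ≤ yt k)
    (hβ : ∀ j ∈ N, yb j = C → b j = β) (hτ : ∀ j ∈ N, yt j = D → t j = τ) (φ : ℝ → ℝ) :
    ∑ j ∈ N, (φ (t j) - φ (b j)) = φ τ - φ β := by
  have dj : ∀ j ∈ N, ∀ k ∈ N, yb j < yt k → yb k < yt j → j = k := by
    intro j hj k hk h1 h2
    have a1 := (hN j hj).1
    have a2 := (hN k hk).1
    have a3 := h.hx j
    have a4 := h.hx k
    exact h.disj j k (by linarith) (by linarith) h1 h2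
  refine chain_sum N (fun j k => yt j = yb k) (fun j => yb j = C) (fun j => yt j = D) _ _
    ?_ ?_ ?_ ?_ ?_ ?_ ?_ ?_ ?_ ?_ ?_
  · obtain ⟨k, k1, k2, k3⟩ := c1 C le_rfl hCD
    exact ⟨k, k1, le_antisymm k2 (hN k k1).2.1⟩
  · intro j hj k hk e1 e2
    have a3 := h.hy j
    have a4 := h.hy k
    exact dj j hj k hk (by linarith) (by linarith)
  · intro j hj e
    simp only [hβ j hj e]
  · obtain ⟨k, k1, k2, k3⟩ := c2 D hCD le_rfl
    exact ⟨k, k1, le_antisymm (hN k k1).2.2 k3⟩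
  · intro j hj k hk e1 e2
    have a3 := h.hy j
    have a4 := h.hy k
    exact dj j hj k hk (by linarith) (by linarith)
  · intro j hj e
    simp only [hτ j hj e]
  · intro j hj k hk e
    have a1 := (hN j hj).1
    have a2 := (hN k hk).1
    have a3 := h.hx j
    have a4 := h.hx k
    rw [hc.adj j k ⟨e, by linarith, by linarith⟩]
  · intro j hj e
    have a3 := h.hy j
    obtain ⟨-, a1, a2⟩ := hN j hj
    obtain ⟨k, k1, k2, k3⟩ := c1 (yt j) (by linarith) (lt_of_le_of_ne a2 e)
    have hkj : yt j = yb k := by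
      by_contra hne
      have hlt : yb k < yt j := lt_of_le_of_ne k2 (Ne.symm hne)
      have := dj j hj k k1 (by linarith) hlt
      subst this
      linarith
    exact ⟨k, k1, hkj, fun e' => by linarith⟩
  · intro k hk e
    have a3 := h.hy k
    obtain ⟨-, a1, a2⟩ := hN k hk
    obtain ⟨j, j1, j2, j3⟩ := c2 (yb k) (lt_of_le_of_ne a1 (Ne.symm e)) (by linarith)
    have hkj : yt j = yb k := by
      by_contra hne
      have hlt : yb k < yt j := lt_of_le_of_ne j3 (Ne.symm hne)
      have := dj j j1 k hk (by linarith) hlt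
      subst this
      linarith
    exact ⟨j, j1, hkj, fun e' => by linarith⟩
  · intro j hj k hk k' hk' e1 e2
    have a3 := h.hy k
    have a4 := h.hy k'
    exact dj k hk k' hk' (by linarith) (by linarith)
  · intro j hj j' hj' k hk e1 e2
    have a3 := h.hy j
    have a4 := h.hy j'
    exact dj j hj j' hj' (by linarith) (by linarith)

/-- If all sums telescope, then the intervals `[b j, t j)` partition `[β, τ)`: test with the
indicator functions of the rays `(y, ∞)`. -/
theorem partition_of_sum (N : Finset I) {b t : I → ℝ} {β τ : ℝ} (hp : ∀ j, b j < t j)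
    (H : ∀ φ : ℝ → ℝ, ∑ j ∈ N, (φ (t j) - φ (b j)) = φ τ - φ β) (hβτ : β ≤ τ) :
    (∀ j ∈ N, β ≤ b j ∧ t j ≤ τ) ∧
    ∀ y, β ≤ y → y < τ → ∃! j, j ∈ N ∧ b j ≤ y ∧ y < t j := by
  classical
  have key : ∀ y, ((N.filter fun j => b j ≤ y ∧ y < t j).card : ℝ) =
      if β ≤ y ∧ y < τ then 1 else 0 := by
    intro y
    have e := H fun z => if y < z then 1 else 0
    rw [Finset.card_filter]
    push_cast
    have e1 : ∀ j ∈ N, (if b j ≤ y ∧ y < t j then (1 : ℝ) else 0) =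
        (if y < t j then 1 else 0) - (if y < b j then 1 else 0) := by
      intro j _
      have := hp j
      split_ifs <;> grind
    rw [Finset.sum_congr rfl e1, e]
    split_ifs <;> grind
  have ne0 : ∀ j ∈ N, ∀ y, b j ≤ y → y < t j → β ≤ y ∧ y < τ := by
    intro j hj y h1 h2
    by_contra hcon
    have := key y
    rw [if_neg hcon, Nat.cast_eq_zero, Finset.card_eq_zero] at this
    have hm : j ∈ N.filter fun j => b j ≤ y ∧ y < t j := Finset.mem_filter.2 ⟨hj, h1, h2⟩
    rw [this] at hm
    simp at hm
  refine ⟨fun j hj => ⟨(ne0 j hj _ le_rfl (hp j)).1, ?_⟩, fun y h1 h2 => ?_⟩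
  · by_contra hcon
    push Not at hcon
    have := ne0 j hj (max τ (b j)) (le_max_right _ _) (max_lt hcon (hp j))
    exact absurd this.2 (not_lt.2 (le_max_left _ _))
  · have := key y
    rw [if_pos ⟨h1, h2⟩, Nat.cast_eq_one, Finset.card_eq_one] at this
    obtain ⟨j, hj⟩ := this
    have hm : ∀ k, k ∈ N.filter (fun j => b j ≤ y ∧ y < t j) ↔ k = j := by
      intro k
      rw [hj, Finset.mem_singleton]
    simp only [Finset.mem_filter] at hm
    exact ⟨j, (hm j).2 rfl, fun k hk => (hm k).1 hk⟩

/-! ### One-sided tilings: neighbours in a configuration -/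

/-- If the right side of `i` contains the left side of one right neighbour, it contains the left
sides of all of them, and in every configuration the right neighbours partition the side of `i`. -/
theorem right_partition [Fintype I] (h : Til xl xr yb yt X1 X2 Y1 Y2) (g : Gen xl xr yb yt)
    (o : OneV xl xr yb yt) {b t : I → ℝ} {B T : ℝ} (hc : Cfg yb yt xl xr Y1 Y2 b t B T) {i j : I}
    (hij : LAdj xl xr yb yt i j) (h1 : yb i ≤ yb j) (h2 : yt j ≤ yt i) :
    (∀ k, LAdj xl xr yb yt i k → b i ≤ b k ∧ t k ≤ t i) ∧
    ∀ y, b i ≤ y → y < t i → ∃! k, LAdj xl xr yb yt i k ∧ b k ≤ y ∧ y < t k := by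
  classical
  have hi : xr i < X2 := by
    have := hij.1
    have := h.hx j
    have := h.br j
    linarith
  have hin : ∀ k, LAdj xl xr yb yt i k → yb i ≤ yb k ∧ yt k ≤ yt i := by
    intro k hk
    rcases o i k hk with hk' | hk'
    · exact hk'
    · have e : k = j := by
        have := hij.1
        have := hk.1
        have := h.hx j
        have := h.hx k
        have := h.hy j
        exact h.disj k j (by linarith) (by linarith) (by linarith) (by linarith)
      exact e ▸ ⟨h1, h2⟩
  have hs := stack_sum h hc (Finset.univ.filter fun k => LAdj xl xr yb yt i k) (x0 := xr i)
    (C := yb i) (D := yt i) (β := b i) (τ := t i) (h.hy i)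
    (by
      intro k hk
      have hk := (Finset.mem_filter.1 hk).2
      exact ⟨hk.1.symm, hin k hk⟩)
    (by
      intro y y1 y2
      obtain ⟨k, k1, k2⟩ := right_ne h hi y1 y2
      exact ⟨k, Finset.mem_filter.2 ⟨Finset.mem_univ _, k1⟩, k2⟩)
    (by
      intro y y1 y2
      obtain ⟨k, k1, k2⟩ := right_se h hi y1 y2
      exact ⟨k, Finset.mem_filter.2 ⟨Finset.mem_univ _, k1⟩, k2⟩)
    (by
      intro k hk e
      exact (corner_bot h g hc (Finset.mem_filter.1 hk).2 e.symm).symm)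
    (by
      intro k hk e
      exact (corner_top h g hc (Finset.mem_filter.1 hk).2 e.symm).symm)
  have hp := partition_of_sum _ hc.pos hs (hc.pos i).le
  simpa only [Finset.mem_filter, Finset.mem_univ, true_and] using hp

theorem left_partition [Fintype I] (h : Til xl xr yb yt X1 X2 Y1 Y2) (g : Gen xl xr yb yt)
    (o : OneV xl xr yb yt) {b t : I → ℝ} {B T : ℝ} (hc : Cfg yb yt xl xr Y1 Y2 b t B T) {i j : I}
    (hij : LAdj xl xr yb yt i j) (h1 : yb j ≤ yb i) (h2 : yt i ≤ yt j) :
    (∀ k, LAdj xl xr yb yt k j → b j ≤ b k ∧ t k ≤ t j) ∧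
    ∀ y, b j ≤ y → y < t j → ∃! k, LAdj xl xr yb yt k j ∧ b k ≤ y ∧ y < t k := by
  have := right_partition h.negx g.negx o.negx hc.negy (ladj_negx.2 hij) h1 h2
  simpa only [ladj_negx] using this

/-- Contacts persist: in a configuration the vertical ranges of horizontal neighbours are still
nested. -/
theorem nested [Fintype I] (h : Til xl xr yb yt X1 X2 Y1 Y2) (g : Gen xl xr yb yt)
    (o : OneV xl xr yb yt) {b t : I → ℝ} {B T : ℝ} (hc : Cfg yb yt xl xr Y1 Y2 b t B T) {i j : I}
    (hij : LAdj xl xr yb yt i j) : (b i ≤ b j ∧ t j ≤ t i) ∨ (b j ≤ b i ∧ t i ≤ t j) := by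
  rcases o i j hij with ⟨h1, h2⟩ | ⟨h1, h2⟩
  · exact Or.inl ((right_partition h g o hc hij h1 h2).1 j hij)
  · exact Or.inr ((left_partition h g o hc hij h1 h2).1 i hij)

/-- In a configuration each height in the range of `i` is met by exactly one right neighbour. -/
theorem right_unique [Fintype I] (h : Til xl xr yb yt X1 X2 Y1 Y2) (g : Gen xl xr yb yt)
    (o : OneV xl xr yb yt) {b t : I → ℝ} {B T : ℝ} (hc : Cfg yb yt xl xr Y1 Y2 b t B T) {i : I}
    (hi : xr i < X2) {y : ℝ} (y1 : b i ≤ y) (y2 : y < t i) :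
    ∃! k, LAdj xl xr yb yt i k ∧ b k ≤ y ∧ y < t k := by
  obtain ⟨j, hij, -⟩ := right_ne h hi le_rfl (h.hy i)
  rcases o i j hij with ⟨h1, h2⟩ | ⟨h1, h2⟩
  · exact (right_partition h g o hc hij h1 h2).2 y y1 y2
  · obtain ⟨p, q⟩ := (left_partition h g o hc hij h1 h2).1 i hij
    refine ⟨j, ⟨hij, by linarith, by linarith⟩, ?_⟩
    rintro k ⟨hk, -⟩
    obtain ⟨e1, e2, e3⟩ := hij
    obtain ⟨f1, f2, f3⟩ := hk
    have := h.hx j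
    have := h.hx k
    exact h.disj k j (by linarith) (by linarith) (by linarith) (by linarith)

theorem left_unique [Fintype I] (h : Til xl xr yb yt X1 X2 Y1 Y2) (g : Gen xl xr yb yt)
    (o : OneV xl xr yb yt) {b t : I → ℝ} {B T : ℝ} (hc : Cfg yb yt xl xr Y1 Y2 b t B T) {i : I}
    (hi : X1 < xl i) {y : ℝ} (y1 : b i ≤ y) (y2 : y < t i) :
    ∃! k, LAdj xl xr yb yt k i ∧ b k ≤ y ∧ y < t k := by
  have := right_unique h.negx g.negx o.negx hc.negy (i := i) (neg_lt_neg hi) y1 y2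
  simpa only [ladj_negx] using this

theorem left_border_unique [Fintype I] (h : Til xl xr yb yt X1 X2 Y1 Y2) {b t : I → ℝ} {B T : ℝ}
    (hc : Cfg yb yt xl xr Y1 Y2 b t B T) (hBT : B ≤ T) {y : ℝ} (y1 : B ≤ y) (y2 : y < T) :
    ∃! k, xl k = X1 ∧ b k ≤ y ∧ y < t k := by
  classical
  have hX := h.hX
  have hs := stack_sum h hc (Finset.univ.filter fun k => xl k = X1) (x0 := X1)
    (C := Y1) (D := Y2) (β := B) (τ := T) h.hY
    (fun k hk => ⟨(Finset.mem_filter.1 hk).2, h.bb k, h.bt k⟩)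
    (by
      intro y y1 y2
      obtain ⟨k, k1, k2, k3⟩ := h.ne X1 y le_rfl hX y1 y2
      exact ⟨k, Finset.mem_filter.2 ⟨Finset.mem_univ _, le_antisymm k1 (h.bl k)⟩, k3⟩)
    (by
      intro y y1 y2
      obtain ⟨k, k1, k2, k3⟩ := h.se X1 y le_rfl hX y1 y2
      exact ⟨k, Finset.mem_filter.2 ⟨Finset.mem_univ _, le_antisymm k1 (h.bl k)⟩, k3⟩)
    (fun k _ e => hc.left k e) (fun k _ e => hc.right k e)
  have hp := (partition_of_sum _ hc.pos hs hBT).2 y y1 y2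
  simpa only [Finset.mem_filter, Finset.mem_univ, true_and] using hp

theorem right_border_unique [Fintype I] (h : Til xl xr yb yt X1 X2 Y1 Y2) {b t : I → ℝ} {B T : ℝ}
    (hc : Cfg yb yt xl xr Y1 Y2 b t B T) (hBT : B ≤ T) {y : ℝ} (y1 : B ≤ y) (y2 : y < T) :
    ∃! k, xr k = X2 ∧ b k ≤ y ∧ y < t k := by
  have := left_border_unique h.negx hc.negy hBT y1 y2
  simpa only [neg_inj] using this

/-! ### A configuration of a one-sided tiling is a weakly equivalent tiling -/

/-- Only weak positivity of the widths is required, so that the bound also applies to limits of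
configurations. -/
theorem left_bound [Fintype I] (h : Til xl xr yb yt X1 X2 Y1 Y2) {l r : I → ℝ} {L : ℝ}
    (pos : ∀ i, l i ≤ r i) (adj : ∀ i j, LAdj xl xr yb yt i j → r i = l j)
    (left : ∀ i, xl i = X1 → l i = L) (i : I) : L ≤ l i := by
  classical
  by_contra hcon
  obtain ⟨j, hj, hmin⟩ := Finset.exists_min_image (Finset.univ.filter fun k => l k < L) xl
    ⟨i, Finset.mem_filter.2 ⟨Finset.mem_univ _, not_le.1 hcon⟩⟩
  have hj := (Finset.mem_filter.1 hj).2
  have hX : X1 < xl j := lt_of_le_of_ne (h.bl j) fun e => hj.ne (left j e.symm)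
  obtain ⟨k, hk⟩ := exists_left h hX
  have h1 := adj k j hk
  have h2 := pos k
  have h3 := hmin k (Finset.mem_filter.2 ⟨Finset.mem_univ _, by linarith⟩)
  have h4 := h.hx k
  have h5 := hk.1
  linarith

theorem right_bound [Fintype I] (h : Til xl xr yb yt X1 X2 Y1 Y2) {l r : I → ℝ} {R : ℝ}
    (pos : ∀ i, l i ≤ r i) (adj : ∀ i j, LAdj xl xr yb yt i j → r i = l j)
    (right : ∀ i, xr i = X2 → r i = R) (i : I) : r i ≤ R := by
  have := left_bound h.negx (l := fun i => -r i) (r := fun i => -l i) (L := -R)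
    (fun i => neg_le_neg (pos i))
    (fun i j hij => congrArg Neg.neg (adj j i (ladj_negx.1 hij)).symm)
    (fun i hi => congrArg Neg.neg (right i (neg_injective hi))) i
  exact neg_le_neg_iff.1 this

/-- Each point of the half-open new bounding rectangle lies in exactly one half-open rectangle of
the configuration: the rectangles meeting a given height form a chain from the left border to the
right border. -/
theorem cfg_cover [Fintype I] (h : Til xl xr yb yt X1 X2 Y1 Y2) (g : Gen xl xr yb yt)
    (o : OneV xl xr yb yt) {l r b t : I → ℝ} {L R B T : ℝ} (hx : Cfg xl xr yb yt X1 X2 l r L R)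
    (hy : Cfg yb yt xl xr Y1 Y2 b t B T) (hLR : L ≤ R) (hBT : B ≤ T) {x y : ℝ}
    (x1 : L ≤ x) (x2 : x < R) (y1 : B ≤ y) (y2 : y < T) :
    ∃! i, (b i ≤ y ∧ y < t i) ∧ l i ≤ x ∧ x < r i := by
  classical
  have hs : ∀ φ : ℝ → ℝ, ∑ j ∈ Finset.univ.filter (fun j => b j ≤ y ∧ y < t j),
      (φ (r j) - φ (l j)) = φ R - φ L := by
    intro φ
    obtain ⟨p, ⟨p1, p2⟩, p3⟩ := left_border_unique h hy hBT y1 y2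
    obtain ⟨q, ⟨q1, q2⟩, q3⟩ := right_border_unique h hy hBT y1 y2
    refine chain_sum _ (LAdj xl xr yb yt) (fun j => xl j = X1) (fun j => xr j = X2) _ _
      ?_ ?_ ?_ ?_ ?_ ?_ ?_ ?_ ?_ ?_ ?_ <;>
      simp only [Finset.mem_filter, Finset.mem_univ, true_and]
    · exact ⟨p, p2, p1⟩
    · intro j hj k hk e1 e2
      rw [p3 j ⟨e1, hj⟩, p3 k ⟨e2, hk⟩]
    · intro j hj e
      rw [hx.left j e]
    · exact ⟨q, q2, q1⟩
    · intro j hj k hk e1 e2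
      rw [q3 j ⟨e1, hj⟩, q3 k ⟨e2, hk⟩]
    · intro j hj e
      rw [hx.right j e]
    · intro j hj k hk hjk
      rw [hx.adj j k hjk]
    · intro j hj e
      obtain ⟨k, ⟨k1, k2⟩, -⟩ := right_unique h g o hy (lt_of_le_of_ne (h.br j) e) hj.1 hj.2
      refine ⟨k, k2, k1, fun e' => ?_⟩
      have := k1.1
      have := h.hx j
      have := h.bl j
      linarith
    · intro j hj e
      obtain ⟨k, ⟨k1, k2⟩, -⟩ := left_unique h g o hy (lt_of_le_of_ne (h.bl j) (Ne.symm e)) hj.1 hj.2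
      refine ⟨k, k2, k1, fun e' => ?_⟩
      have := k1.1
      have := h.hx j
      have := h.br j
      linarith
    · intro j hj k hk k' hk' e1 e2
      have hi : xr j < X2 := by
        have := e1.1
        have := h.hx k
        have := h.br k
        linarith
      exact (right_unique h g o hy hi hj.1 hj.2).unique ⟨e1, hk⟩ ⟨e2, hk'⟩
    · intro j hj j' hj' k hk e1 e2
      have hi : X1 < xl k := by
        have := e1.1
        have := h.hx j
        have := h.bl j
        linarith
      exact (left_unique h g o hy hi hk.1 hk.2).unique ⟨e1, hj⟩ ⟨e2, hj'⟩
  have hp := (partition_of_sum _ hx.pos hs hLR).2 x x1 x2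
  simpa only [Finset.mem_filter, Finset.mem_univ, true_and] using hp

/-- In a configuration of a one-sided tiling the contacts between rectangles are unchanged. The
hypothesis `dj` says that the new rectangles have disjoint interiors. -/
theorem cfg_ladj_iff [Fintype I] (h : Til xl xr yb yt X1 X2 Y1 Y2) (g : Gen xl xr yb yt)
    (o : OneV xl xr yb yt) {l r b t : I → ℝ} {L R B T : ℝ} (hx : Cfg xl xr yb yt X1 X2 l r L R)
    (hy : Cfg yb yt xl xr Y1 Y2 b t B T)
    (dj : ∀ i j, l i < r j → l j < r i → b i < t j → b j < t i → i = j) (i j : I) :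
    LAdj xl xr yb yt i j ↔ LAdj l r b t i j := by
  have pi := hy.pos i
  have pj := hy.pos j
  have qj := hx.pos j
  constructor
  · intro hij
    refine ⟨hx.adj i j hij, ?_⟩
    rcases nested h g o hy hij with ⟨p, q⟩ | ⟨p, q⟩ <;> constructor <;> linarith
  · rintro ⟨e1, e2, e3⟩
    have hi : xr i < X2 := by
      refine lt_of_le_of_ne (h.br i) fun e => ?_
      have a1 := right_bound h (fun i => (hx.pos i).le) hx.adj hx.right j
      have a2 := hx.right i e
      linarith
    obtain ⟨k, ⟨k1, k2, k3⟩, -⟩ := right_unique h g o hy hi (y := max (b i) (b j))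
      (le_max_left _ _) (max_lt pi e3)
    have e := hx.adj i k k1
    have qk := hx.pos k
    have m1 : b j < t k := lt_of_le_of_lt (le_max_right _ _) k3
    have m2 : b k < t j := lt_of_le_of_lt k2 (max_lt e2 pj)
    have : k = j := dj k j (by linarith) (by linarith) m2 m1
    exact this ▸ k1

theorem cfg_left_iff [Fintype I] (h : Til xl xr yb yt X1 X2 Y1 Y2) {l r : I → ℝ} {L R : ℝ}
    (hx : Cfg xl xr yb yt X1 X2 l r L R) (i : I) : xl i = X1 ↔ l i = L := by
  refine ⟨hx.left i, fun e => ?_⟩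
  by_contra hne
  obtain ⟨k, hk⟩ := exists_left h (lt_of_le_of_ne (h.bl i) (Ne.symm hne))
  have a1 := left_bound h (fun i => (hx.pos i).le) hx.adj hx.left k
  have a2 := hx.adj k i hk
  have a3 := hx.pos k
  linarith

theorem cfg_right_iff [Fintype I] (h : Til xl xr yb yt X1 X2 Y1 Y2) {l r : I → ℝ} {L R : ℝ}
    (hx : Cfg xl xr yb yt X1 X2 l r L R) (i : I) : xr i = X2 ↔ r i = R := by
  have := cfg_left_iff h.negx hx.negx i
  simpa only [neg_inj] using this

/-! ### Existence of a configuration with prescribed areas -/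

/-- Maximizing `∏ i, (r i - l i) ^ w i` over the horizontal configurations with fixed border gives
one for which `w i / (r i - l i)` is a flow: it is orthogonal to all variations `vl`, `vr`. -/
theorem exists_flow [Fintype I] (h : Til xl xr yb yt X1 X2 Y1 Y2) (w : I → ℝ) (hw : ∀ i, 0 < w i) :
    ∃ l r : I → ℝ, Cfg xl xr yb yt X1 X2 l r X1 X2 ∧
      ∀ vl vr : I → ℝ, (∀ i j, LAdj xl xr yb yt i j → vr i = vl j) →
        (∀ i, xl i = X1 → vl i = 0) → (∀ i, xr i = X2 → vr i = 0) →
        ∑ i, w i / (r i - l i) * (vr i - vl i) = 0 := by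
  classical
  let K : Set ((I → ℝ) × (I → ℝ)) := {p | (∀ i, p.1 i ≤ p.2 i) ∧
    (∀ i j, LAdj xl xr yb yt i j → p.2 i = p.1 j) ∧
    (∀ i, xl i = X1 → p.1 i = X1) ∧ (∀ i, xr i = X2 → p.2 i = X2)}
  have hclosed : IsClosed K := by
    simp only [K, Set.ofPred_and, Set.ofPred_forall]
    refine IsClosed.inter ?_ (IsClosed.inter ?_ (IsClosed.inter ?_ ?_))
    · exact isClosed_iInter fun i => isClosed_le (by fun_prop) (by fun_prop)
    · exact isClosed_iInter fun i => isClosed_iInter fun j => isClosed_iInter fun _ =>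
        isClosed_eq (by fun_prop) (by fun_prop)
    · exact isClosed_iInter fun i => isClosed_iInter fun _ => isClosed_eq (by fun_prop) (by fun_prop)
    · exact isClosed_iInter fun i => isClosed_iInter fun _ => isClosed_eq (by fun_prop) (by fun_prop)
  have hK : IsCompact K := by
    refine IsCompact.of_isClosed_subset
      (isCompact_Icc (a := ((fun _ => X1, fun _ => X1) : (I → ℝ) × (I → ℝ)))
        (b := (fun _ => X2, fun _ => X2))) hclosed ?_
    rintro p ⟨p1, p2, p3, p4⟩
    have a1 := left_bound h p1 p2 p3
    have a2 := right_bound h p1 p2 p4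
    exact ⟨⟨a1, fun i => (a1 i).trans (p1 i)⟩, ⟨fun i => (p1 i).trans (a2 i), a2⟩⟩
  let G : (I → ℝ) × (I → ℝ) → ℝ := fun p => ∏ i, (p.2 i - p.1 i) ^ w i
  have hG : Continuous G := by
    refine continuous_finsetProd _ fun i _ => ?_
    exact (Real.continuous_rpow_const (hw i).le).comp (by fun_prop)
  have hT : (xl, xr) ∈ K :=
    ⟨fun i => (h.hx i).le, fun i j hij => hij.1, fun i e => e, fun i e => e⟩
  obtain ⟨p, hp, hmax⟩ := hK.exists_isMaxOn ⟨_, hT⟩ hG.continuousOn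
  have hGp : 0 < G p := by
    refine lt_of_lt_of_le ?_ (hmax hT)
    exact Finset.prod_pos fun i _ => Real.rpow_pos_of_pos (sub_pos.2 (h.hx i)) _
  obtain ⟨p1, p2, p3, p4⟩ := hp
  have pos : ∀ i, p.1 i < p.2 i := by
    intro i
    refine lt_of_le_of_ne (p1 i) fun e => hGp.ne' ?_
    refine Finset.prod_eq_zero (Finset.mem_univ i) ?_
    rw [e, sub_self, Real.zero_rpow (hw i).ne']
  refine ⟨p.1, p.2, ⟨pos, p2, p3, p4⟩, fun vl vr v1 v2 v3 => ?_⟩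
  let H : ℝ → ℝ := fun s => ∑ i, w i * Real.log ((p.2 i - p.1 i) + s * (vr i - vl i))
  have hd : HasDerivAt H (∑ i, w i * ((vr i - vl i) / ((p.2 i - p.1 i) + 0 * (vr i - vl i)))) 0 := by
    refine HasDerivAt.fun_sum fun i _ => ?_
    refine HasDerivAt.const_mul _ ?_
    refine HasDerivAt.log ?_ ?_
    · simpa using ((hasDerivAt_id (0 : ℝ)).mul_const (vr i - vl i)).const_add (p.2 i - p.1 i)
    · have := pos i
      rw [zero_mul, add_zero]
      linarith
  have hloc : IsLocalMax H 0 := by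
    have ev : ∀ᶠ s in nhds (0 : ℝ), ∀ i, 0 < (p.2 i - p.1 i) + s * (vr i - vl i) := by
      refine Filter.eventually_all.2 fun i => ?_
      have hcont : ContinuousAt (fun s : ℝ => (p.2 i - p.1 i) + s * (vr i - vl i)) 0 := by fun_prop
      refine hcont.eventually (lt_mem_nhds ?_)
      have := pos i
      simp only [zero_mul, add_zero]
      linarith
    filter_upwards [ev] with s hs
    have mem : ((fun i => p.1 i + s * vl i, fun i => p.2 i + s * vr i) :
        (I → ℝ) × (I → ℝ)) ∈ K := by
      refine ⟨fun i => ?_, fun i j hij => ?_, fun i e => ?_, fun i e => ?_⟩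
      · have := hs i
        simp only
        linarith
      · simp only [p2 i j hij, v1 i j hij]
      · simp only [p3 i e, v2 i e, mul_zero, add_zero]
      · simp only [p4 i e, v3 i e, mul_zero, add_zero]
    have logG : ∀ q : (I → ℝ) × (I → ℝ), (∀ i, 0 < q.2 i - q.1 i) →
        Real.log (G q) = ∑ i, w i * Real.log (q.2 i - q.1 i) := by
      intro q hq
      simp only [G]
      rw [Real.log_prod fun i _ => (Real.rpow_pos_of_pos (hq i) _).ne']
      exact Finset.sum_congr rfl fun i _ => Real.log_rpow (hq i) _
    have hpos' : ∀ i, 0 < (p.2 i + s * vr i) - (p.1 i + s * vl i) := fun i => by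
      have := hs i
      linarith
    have hle := Real.log_le_log (Finset.prod_pos fun i _ => Real.rpow_pos_of_pos (hpos' i) (w i))
      (hmax mem)
    have e1 := logG (fun i => p.1 i + s * vl i, fun i => p.2 i + s * vr i) hpos'
    have e2 := logG p fun i => sub_pos.2 (pos i)
    have e3 : H s = ∑ i, w i * Real.log ((p.2 i + s * vr i) - (p.1 i + s * vl i)) := by
      refine Finset.sum_congr rfl fun i _ => ?_
      congr 2
      ring
    have e4 : H 0 = ∑ i, w i * Real.log (p.2 i - p.1 i) := by
      simp only [H, zero_mul, add_zero]
    rw [e3, e4, ← e2, ← e1]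
    exact hle
  have := hloc.hasDerivAt_eq_zero hd
  rw [← this]
  refine Finset.sum_congr rfl fun i _ => ?_
  rw [zero_mul, add_zero]
  ring

/-- Planar duality: a positive flow `f` through the rectangles from left to right is the height
function of a vertical configuration. The new height of a horizontal segment is the total flow
passing below it at any abscissa of the segment. -/
theorem exists_dual [Fintype I] (h : Til xl xr yb yt X1 X2 Y1 Y2) (f : I → ℝ) (hf : ∀ i, 0 < f i)
    (hflow : ∀ vl vr : I → ℝ, (∀ i j, LAdj xl xr yb yt i j → vr i = vl j) →
        (∀ i, xl i = X1 → vl i = 0) → (∀ i, xr i = X2 → vr i = 0) →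
        ∑ i, f i * (vr i - vl i) = 0) :
    ∃ (b t : I → ℝ) (T : ℝ), Cfg yb yt xl xr Y1 Y2 b t 0 T ∧ ∀ i, t i - b i = f i := by
  classical
  -- `C x y` is the flow crossing the vertical line at `x` below height `y`
  let C : ℝ → ℝ → ℝ := fun x y => ∑ m, if (xl m ≤ x ∧ x < xr m) ∧ yt m ≤ y then f m else 0
  have hC : ∀ a c y : ℝ, X1 ≤ a → a ≤ c → c < X2 →
      (∀ m m', LAdj xl xr yb yt m m' → a < xr m → xr m ≤ c → (yt m ≤ y ↔ yt m' ≤ y)) →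
      C a y = C c y := by
    intro a c y ha hac hc hm
    have := hflow (fun m => if (a < xl m ∧ xl m ≤ c) ∧ yt m ≤ y then 1 else 0)
      (fun m => if (a < xr m ∧ xr m ≤ c) ∧ yt m ≤ y then 1 else 0)
      (by
        intro i j hij
        have e := hij.1
        have := hm i j hij
        rw [← e]
        split_ifs <;> grind)
      (by
        intro i e
        rw [if_neg]
        rintro ⟨⟨p, -⟩, -⟩
        linarith)
      (by
        intro i e
        rw [if_neg]
        rintro ⟨⟨-, p⟩, -⟩
        linarith)
    rw [← sub_eq_zero, ← this]
    simp only [C]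
    rw [← Finset.sum_sub_distrib]
    refine Finset.sum_congr rfl fun m _ => ?_
    have := h.hx m
    split_ifs <;> grind
  have hdiff : ∀ i, C (xl i) (yt i) - C (xl i) (yb i) = f i := by
    intro i
    simp only [C]
    rw [← Finset.sum_sub_distrib, Finset.sum_eq_single i]
    · have := h.hx i
      have := h.hy i
      split_ifs <;> grind
    · intro m _ hmi
      have := h.hx i
      have := h.hy i
      have := h.hy m
      have := h.disj m i
      split_ifs <;> grind
    · simp
  refine ⟨fun i => C (xl i) (yb i), fun i => C (xl i) (yt i), C X1 Y2, ⟨fun i => ?_, ?_, ?_, ?_⟩,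
    hdiff⟩
  · have := hdiff i
    have := hf i
    linarith
  · rintro i j ⟨e1, e2, e3⟩
    have xi := h.hx i
    have xj := h.hx j
    have yi := h.hy i
    have yj := h.hy j
    rw [← e1]
    -- a rectangle whose side crosses the common segment would overlap the wider of `i` and `j`
    rcases le_total (xl i) (xl j) with hle | hle
    · refine hC _ _ _ (h.bl i) hle (by linarith [h.br j]) ?_
      intro m m' hm m1 m2
      have xm := h.hx m
      have ym := h.hy m
      have xm' := h.hx m'
      have ym' := h.hy m'
      obtain ⟨f1, f2, f3⟩ := hm
      constructor
      · intro hmy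
        by_contra hcon
        have := h.disj m' i (by linarith) (by linarith) (by linarith) (by linarith)
        subst this
        linarith
      · intro hmy
        by_contra hcon
        have := h.disj m i (by linarith) (by linarith) (by linarith) (by linarith)
        subst this
        linarith
    · refine (hC _ _ _ (h.bl j) hle (by linarith [h.br i]) ?_).symm
      intro m m' hm m1 m2
      have xm := h.hx m
      have ym := h.hy m
      have xm' := h.hx m'
      have ym' := h.hy m'
      obtain ⟨f1, f2, f3⟩ := hm
      constructor
      · intro hmy
        by_contra hcon
        have := h.disj m' j (by linarith) (by linarith) (by linarith) (by linarith)
        subst this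
        linarith
      · intro hmy
        by_contra hcon
        have := h.disj m j (by linarith) (by linarith) (by linarith) (by linarith)
        subst this
        linarith
  · intro i e
    refine Finset.sum_eq_zero fun m _ => if_neg ?_
    rintro ⟨-, p⟩
    have := h.hy m
    have := h.bb m
    linarith
  · intro i e
    rw [e]
    refine (hC _ _ _ le_rfl (h.bl i) (lt_of_lt_of_le (h.hx i) (h.br i)) ?_).symm
    intro m m' _ _ _
    exact iff_of_true (h.bt m) (h.bt m')

/-! ### Maximal internal segments in coordinates -/

/-- The point `(x, y)` lies on the boundary of some rectangle. -/
def Bd {I : Type*} (xl xr yb yt : I → ℝ) (x y : ℝ) : Prop :=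
  ∃ i, (xl i ≤ x ∧ x ≤ xr i ∧ yb i ≤ y ∧ y ≤ yt i) ∧
    (x ≤ xl i ∨ xr i ≤ x ∨ y ≤ yb i ∨ yt i ≤ y)

/-- `{x} × [c, d]` is an internal segment. With the roles of the axes exchanged the same predicate
describes horizontal internal segments. -/
def IntV {I : Type*} (xl xr yb yt : I → ℝ) (X1 X2 Y1 Y2 x c d : ℝ) : Prop :=
  (X1 < x ∧ x < X2) ∧ Y1 ≤ c ∧ c < d ∧ d ≤ Y2 ∧ ∀ y, c ≤ y → y ≤ d → Bd xl xr yb yt x y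

/-- `{x} × [c, d]` is an internal segment that is maximal among the vertical ones. -/
def MaxV {I : Type*} (xl xr yb yt : I → ℝ) (X1 X2 Y1 Y2 x c d : ℝ) : Prop :=
  IntV xl xr yb yt X1 X2 Y1 Y2 x c d ∧
  ∀ c' d', c' ≤ c → d ≤ d' → IntV xl xr yb yt X1 X2 Y1 Y2 x c' d' → c' = c ∧ d' = d

/-- Four rectangles around two consecutive junctions on opposite sides of a vertical segment: `p`
below `a` on its left, `e` below `q` on its right, with the top of `p` lower than the top of `e`. -/
def BadV {I : Type*} (xl xr yb yt : I → ℝ) (p q : I) : Prop :=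
  ∃ a e, LAdj yb yt xl xr p a ∧ LAdj yb yt xl xr e q ∧
    LAdj xl xr yb yt a e ∧ LAdj xl xr yb yt p e ∧ LAdj xl xr yb yt a q

theorem bd_swap {x y : ℝ} (hb : Bd xl xr yb yt x y) : Bd yb yt xl xr y x := by
  obtain ⟨i, ⟨h1, h2, h3, h4⟩, h5⟩ := hb
  exact ⟨i, ⟨h3, h4, h1, h2⟩, by tauto⟩

theorem bd_negx {x y : ℝ} :
    Bd (fun i => -xr i) (fun i => -xl i) yb yt (-x) y ↔ Bd xl xr yb yt x y := by
  constructor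
  · rintro ⟨i, ⟨h1, h2, h3, h4⟩, h5⟩
    refine ⟨i, ⟨neg_le_neg_iff.1 h2, neg_le_neg_iff.1 h1, h3, h4⟩, ?_⟩
    simp only [neg_le_neg_iff] at h5
    tauto
  · rintro ⟨i, ⟨h1, h2, h3, h4⟩, h5⟩
    refine ⟨i, ⟨neg_le_neg_iff.2 h2, neg_le_neg_iff.2 h1, h3, h4⟩, ?_⟩
    simp only [neg_le_neg_iff]
    tauto

theorem bd_negy {x y : ℝ} :
    Bd xl xr (fun i => -yt i) (fun i => -yb i) x (-y) ↔ Bd xl xr yb yt x y :=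
  ⟨fun hb => bd_swap (bd_negx.1 (bd_swap hb)), fun hb => bd_swap (bd_negx.2 (bd_swap hb))⟩

theorem intV_negx {x c d : ℝ} :
    IntV (fun i => -xr i) (fun i => -xl i) yb yt (-X2) (-X1) Y1 Y2 (-x) c d ↔
      IntV xl xr yb yt X1 X2 Y1 Y2 x c d := by
  simp only [IntV, bd_negx, neg_lt_neg_iff]
  tauto

theorem MaxV.negx {x c d : ℝ} (hm : MaxV xl xr yb yt X1 X2 Y1 Y2 x c d) :
    MaxV (fun i => -xr i) (fun i => -xl i) yb yt (-X2) (-X1) Y1 Y2 (-x) c d :=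
  ⟨intV_negx.2 hm.1, fun c' d' h1 h2 h3 => hm.2 c' d' h1 h2 (intV_negx.1 h3)⟩

theorem intV_negy {x c d : ℝ} :
    IntV xl xr (fun i => -yt i) (fun i => -yb i) X1 X2 (-Y2) (-Y1) x (-d) (-c) ↔
      IntV xl xr yb yt X1 X2 Y1 Y2 x c d := by
  constructor
  · rintro ⟨h1, h2, h3, h4, h5⟩
    exact ⟨h1, by linarith, by linarith, by linarith,
      fun y y1 y2 => bd_negy.1 (h5 (-y) (by linarith) (by linarith))⟩
  · rintro ⟨h1, h2, h3, h4, h5⟩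
    refine ⟨h1, by linarith, by linarith, by linarith, fun y y1 y2 => ?_⟩
    have := bd_negy.2 (h5 (-y) (by linarith) (by linarith))
    rwa [neg_neg] at this

theorem MaxV.negy {x c d : ℝ} (hm : MaxV xl xr yb yt X1 X2 Y1 Y2 x c d) :
    MaxV xl xr (fun i => -yt i) (fun i => -yb i) X1 X2 (-Y2) (-Y1) x (-d) (-c) := by
  refine ⟨intV_negy.2 hm.1, fun c' d' h1 h2 h3 => ?_⟩
  have := hm.2 (-d') (-c') (by linarith) (by linarith)
    (intV_negy.1 (by rwa [neg_neg, neg_neg]))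
  constructor <;> linarith

/-- Just above any point of a maximal segment (its top excepted) there is a rectangle on its
left, with its right side contained in the segment. -/
theorem MaxV.left_up {x c d : ℝ} (hm : MaxV xl xr yb yt X1 X2 Y1 Y2 x c d)
    (h : Til xl xr yb yt X1 X2 Y1 Y2) {y : ℝ} (y1 : c ≤ y) (y2 : y < d) :
    ∃ m, xr m = x ∧ yb m ≤ y ∧ y < yt m ∧ c ≤ yb m ∧ yt m ≤ d := by
  obtain ⟨⟨⟨i1, i2⟩, i3, i4, i5, i6⟩, hmax⟩ := hm
  obtain ⟨m, m1, m2, m3, m4⟩ := h.nw x y i1 i2.le (by linarith) (by linarith)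
  have hx : xr m = x := by
    by_contra hne
    have hlt : x < xr m := lt_of_le_of_ne m2 (Ne.symm hne)
    obtain ⟨z, z1, z2⟩ := exists_between (lt_min y2 m4)
    have z3 := lt_of_lt_of_le z2 (min_le_left _ _)
    have z4 := lt_of_lt_of_le z2 (min_le_right _ _)
    obtain ⟨n, ⟨n1, n2, n3, n4⟩, n5⟩ := i6 z (by linarith) z3.le
    have := h.disj m n (by linarith) (by linarith) (by linarith) (by linarith)
    subst this
    rcases n5 with n5 | n5 | n5 | n5 <;> linarith
  obtain ⟨e1, e2⟩ := hmax (min c (yb m)) (max d (yt m)) (min_le_left _ _) (le_max_left _ _)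
    ⟨⟨i1, i2⟩, le_min i3 (h.bb m), lt_of_le_of_lt (min_le_left _ _)
      (lt_of_lt_of_le i4 (le_max_left _ _)), max_le i5 (h.bt m), by
      intro z z1 z2
      by_cases hz : c ≤ z ∧ z ≤ d
      · exact i6 z hz.1 hz.2
      · refine ⟨m, ⟨m1.le, m2, ?_, ?_⟩, Or.inr (Or.inl hx.le)⟩
        · rcases min_le_iff.1 z1 with z1 | z1
          · have : d < z := by
              by_contra hcon
              exact hz ⟨z1, not_lt.1 hcon⟩
            linarith
          · exact z1
        · rcases le_max_iff.1 z2 with z2 | z2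
          · have : z < c := by
              by_contra hcon
              exact hz ⟨not_lt.1 hcon, z2⟩
            linarith
          · exact z2⟩
  exact ⟨m, hx, m3, m4, min_eq_left_iff.1 e1, max_eq_left_iff.1 e2⟩

theorem MaxV.left_down {x c d : ℝ} (hm : MaxV xl xr yb yt X1 X2 Y1 Y2 x c d)
    (h : Til xl xr yb yt X1 X2 Y1 Y2) {y : ℝ} (y1 : c < y) (y2 : y ≤ d) :
    ∃ m, xr m = x ∧ yb m < y ∧ y ≤ yt m ∧ c ≤ yb m ∧ yt m ≤ d := by
  obtain ⟨m, m1, m2, m3, m4, m5⟩ := hm.negy.left_up h.negy (neg_le_neg y2) (neg_lt_neg y1)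
  exact ⟨m, m1, by linarith, by linarith, by linarith, by linarith⟩

theorem MaxV.right_up {x c d : ℝ} (hm : MaxV xl xr yb yt X1 X2 Y1 Y2 x c d)
    (h : Til xl xr yb yt X1 X2 Y1 Y2) {y : ℝ} (y1 : c ≤ y) (y2 : y < d) :
    ∃ m, xl m = x ∧ yb m ≤ y ∧ y < yt m ∧ c ≤ yb m ∧ yt m ≤ d := by
  obtain ⟨m, m1, m2⟩ := hm.negx.left_up h.negx y1 y2
  exact ⟨m, neg_injective m1, m2⟩

/-- `u` and `e` are the lowest rectangles on the left and right of a maximal segment. If `u` ends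
below `e`, take `q` above `e`, `a` the left rectangle reaching across the top of `e` (genericity
excludes a junction there), and `p` below `a`. -/
theorem badV_of_lt (h : Til xl xr yb yt X1 X2 Y1 Y2) (g : Gen xl xr yb yt) {x c d : ℝ}
    (hm : MaxV xl xr yb yt X1 X2 Y1 Y2 x c d) {u e : I} (u1 : xr u = x) (u2 : yb u = c)
    (e1 : xl e = x) (e2 : yb e = c) (hlt : yt u < yt e) (hd : yt e < d) :
    ∃ p q, BadV xl xr yb yt p q := by
  have he := h.hy e
  have hu := h.hy u
  have he' := h.hx e
  have hu' := h.hx u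
  obtain ⟨a, a1, a2, a3, a4, a5⟩ := hm.left_up h (y := yt e) (by linarith) hd
  obtain ⟨q, q1, q2, q3, q4, q5⟩ := hm.right_up h (y := yt e) (by linarith) hd
  have ha := h.hx a
  have hq := h.hx q
  have qe : yb q = yt e := by
    by_contra hne
    have hl : yb q < yt e := lt_of_le_of_ne q2 hne
    have := h.disj q e (by linarith) (by linarith) (by linarith) (by linarith)
    subst this
    linarith
  have ae : yb a < yt e := by
    refine lt_of_le_of_ne a2 fun heq => ?_
    obtain ⟨s, s1, s2, s3, s4, s5⟩ := hm.left_down h (y := yt e) (by linarith) hd.le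
    have hs := h.hx s
    refine g x (yt e) a s e q ?_ ?_ ?_ ?_ ?_ ?_ ?_
    · rintro rfl; linarith
    · rintro rfl; linarith
    · rintro rfl; linarith
    · rintro rfl; linarith
    · rintro rfl; linarith
    · rintro rfl; linarith
    · rintro m (rfl | rfl | rfl | rfl) <;> refine ⟨?_, ?_, ?_, ?_⟩ <;> linarith
  have ua : yt u ≤ yb a := by
    by_contra hcon
    have := h.disj a u (by linarith) (by linarith) (by linarith) (by linarith)
    subst this
    linarith
  obtain ⟨p, p1, p2, p3, p4, p5⟩ := hm.left_down h (y := yb a) (by linarith) (by linarith)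
  have hp := h.hx p
  have pa : yt p = yb a := by
    by_contra hne
    have hl : yb a < yt p := lt_of_le_of_ne p3 (Ne.symm hne)
    have := h.disj p a (by linarith) (by linarith) (by linarith) (by linarith)
    subst this
    linarith
  refine ⟨p, q, a, e, ?_, ?_, ?_, ?_, ?_⟩ <;> refine ⟨?_, ?_, ?_⟩ <;> linarith

/-- A maximal segment that is not a side of any rectangle has at least two rectangles on both
sides, which yields two junctions as in `BadV`, up to reflection. -/
theorem side_or_badV (h : Til xl xr yb yt X1 X2 Y1 Y2) (g : Gen xl xr yb yt) {x c d : ℝ}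
    (hm : MaxV xl xr yb yt X1 X2 Y1 Y2 x c d) :
    (∃ k, (xl k = x ∨ xr k = x) ∧ yb k = c ∧ yt k = d) ∨
    ∃ p q, BadV xl xr yb yt p q ∨ BadV (fun i => -xr i) (fun i => -xl i) yb yt p q := by
  have hcd := hm.1.2.2.1
  obtain ⟨u, u1, u2, u3, u4, u5⟩ := hm.left_up h le_rfl hcd
  obtain ⟨e, e1, e2, e3, e4, e5⟩ := hm.right_up h le_rfl hcd
  have u6 := le_antisymm u2 u4
  have e6 := le_antisymm e2 e4
  by_cases hu : yt u = d
  · exact Or.inl ⟨u, Or.inr u1, u6, hu⟩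
  by_cases he : yt e = d
  · exact Or.inl ⟨e, Or.inl e1, e6, he⟩
  right
  have hu := lt_of_le_of_ne u5 hu
  have he := lt_of_le_of_ne e5 he
  rcases lt_trichotomy (yt u) (yt e) with hlt | heq | hlt
  · obtain ⟨p, q, hb⟩ := badV_of_lt h g hm u1 u6 e1 e6 hlt he
    exact ⟨p, q, Or.inl hb⟩
  · obtain ⟨a, a1, a2, a3, a4, a5⟩ := hm.left_up h (y := yt u) (by linarith) hu
    obtain ⟨b, b1, b2, b3, b4, b5⟩ := hm.right_up h (y := yt u) (by linarith) hu
    have ha := h.hx a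
    have hb := h.hx b
    have hu' := h.hx u
    have he' := h.hx e
    exfalso
    refine g x (yt u) u e a b ?_ ?_ ?_ ?_ ?_ ?_ ?_
    · rintro rfl; linarith
    · rintro rfl; linarith
    · rintro rfl; linarith
    · rintro rfl; linarith
    · rintro rfl; linarith
    · rintro rfl; linarith
    · rintro m (rfl | rfl | rfl | rfl) <;> refine ⟨?_, ?_, ?_, ?_⟩ <;> linarith
  · obtain ⟨p, q, hb⟩ := badV_of_lt h.negx g.negx hm.negx (u := e) (e := u)
      (congrArg Neg.neg e1) e6 (congrArg Neg.neg u1) u6 hlt hu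
    exact ⟨p, q, Or.inr hb⟩

theorem exists_low {A : Set ℝ} (hA : IsClosed A) {p Y : ℝ} (hp : p ∈ A) (hY : Y ≤ p) :
    ∃ c, Y ≤ c ∧ c ≤ p ∧ (∀ y, c ≤ y → y ≤ p → y ∈ A) ∧
      ∀ c', Y ≤ c' → (∀ y, c' ≤ y → y ≤ p → y ∈ A) → c ≤ c' := by
  let S : Set ℝ := {c | Y ≤ c ∧ c ≤ p ∧ ∀ y, c ≤ y → y ≤ p → y ∈ A}
  have hS : p ∈ S := ⟨hY, le_rfl, fun y y1 y2 => le_antisymm y2 y1 ▸ hp⟩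
  have hb : BddBelow S := ⟨Y, fun c hc => hc.1⟩
  have hSA : S ⊆ A := fun c hc => hc.2.2 c le_rfl hc.2.1
  refine ⟨sInf S, le_csInf ⟨p, hS⟩ fun c hc => hc.1, csInf_le hb hS, fun y y1 y2 => ?_,
    fun c' h1 h2 => ?_⟩
  · rcases y1.eq_or_lt with e | hlt
    · rw [← e]
      exact hA.closure_subset_iff.2 hSA (csInf_mem_closure ⟨p, hS⟩ hb)
    · obtain ⟨c, hc, hcy⟩ := exists_lt_of_csInf_lt ⟨p, hS⟩ hlt
      exact hc.2.2 y hcy.le y2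
  · rcases le_total c' p with hle | hle
    · exact csInf_le hb ⟨h1, hle, h2⟩
    · exact (csInf_le hb hS).trans hle

theorem exists_high {A : Set ℝ} (hA : IsClosed A) {p Y : ℝ} (hp : p ∈ A) (hY : p ≤ Y) :
    ∃ d, d ≤ Y ∧ p ≤ d ∧ (∀ y, p ≤ y → y ≤ d → y ∈ A) ∧
      ∀ d', d' ≤ Y → (∀ y, p ≤ y → y ≤ d' → y ∈ A) → d' ≤ d := by
  obtain ⟨c, c1, c2, c3, c4⟩ := exists_low (A := Neg.neg ⁻¹' A) (hA.preimage continuous_neg)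
    (p := -p) (Y := -Y) (by simpa using hp) (neg_le_neg hY)
  refine ⟨-c, by linarith, by linarith, fun y y1 y2 => ?_, fun d' h1 h2 => ?_⟩
  · have := c3 (-y) (by linarith) (by linarith)
    simpa using this
  · have := c4 (-d') (by linarith) fun y y1 y2 => h2 (-y) (by linarith) (by linarith)
    linarith

theorem isClosed_bd [Finite I] (xl xr yb yt : I → ℝ) (x : ℝ) :
    IsClosed {y | Bd xl xr yb yt x y} := by
  have e : {y | Bd xl xr yb yt x y} = ⋃ i, ({y : ℝ | xl i ≤ x} ∩ {y | x ≤ xr i} ∩ {y | yb i ≤ y} ∩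
      {y | y ≤ yt i}) ∩ ({y | x ≤ xl i} ∪ {y | xr i ≤ x} ∪ {y | y ≤ yb i} ∪ {y | yt i ≤ y}) := by
    ext y
    simp only [Bd, Set.mem_ofPred_eq, Set.mem_iUnion, Set.mem_inter_iff, Set.mem_union]
    refine exists_congr fun i => ?_
    tauto
  rw [e]
  refine isClosed_iUnion_of_finite fun i => IsClosed.inter ?_ ?_
  · exact ((isClosed_const.inter isClosed_const).inter isClosed_Ici).inter isClosed_Iic
  · exact ((isClosed_const.union isClosed_const).union isClosed_Iic).union isClosed_Ici

/-- Every vertical contact lies on a maximal segment, which contains both sides in contact. -/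
theorem exists_maxV [Fintype I] (h : Til xl xr yb yt X1 X2 Y1 Y2) {i j : I}
    (hij : LAdj xl xr yb yt i j) :
    ∃ c d, MaxV xl xr yb yt X1 X2 Y1 Y2 (xr i) c d ∧
      (c ≤ yb i ∧ c ≤ yb j) ∧ (yt i ≤ d ∧ yt j ≤ d) := by
  obtain ⟨e1, e2, e3⟩ := hij
  have xi := h.hx i
  have xj := h.hx j
  have yi := h.hy i
  have yj := h.hy j
  have bi : ∀ y, yb i ≤ y → y ≤ yt i → Bd xl xr yb yt (xr i) y := fun y y1 y2 =>
    ⟨i, ⟨xi.le, le_rfl, y1, y2⟩, Or.inr (Or.inl le_rfl)⟩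
  have bj : ∀ y, yb j ≤ y → y ≤ yt j → Bd xl xr yb yt (xr i) y := fun y y1 y2 =>
    ⟨j, ⟨e1.ge, by linarith, y1, y2⟩, Or.inl e1.le⟩
  have hA := isClosed_bd xl xr yb yt (xr i)
  obtain ⟨p, p1, p2⟩ := exists_between (lt_min (max_lt yi e3) (max_lt e2 yj))
  have p3 := lt_of_le_of_lt (le_max_left _ _) p1
  have p4 := lt_of_le_of_lt (le_max_right _ _) p1
  have p5 := lt_of_lt_of_le p2 (min_le_left _ _)
  have p6 := lt_of_lt_of_le p2 (min_le_right _ _)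
  have hp : p ∈ {y | Bd xl xr yb yt (xr i) y} := bi p p3.le p5.le
  obtain ⟨c, c1, c2, c3, c4⟩ := exists_low hA hp (Y := Y1) (by linarith [h.bb i])
  obtain ⟨d, d1, d2, d3, d4⟩ := exists_high hA hp (Y := Y2) (by linarith [h.bt i])
  have cb : c ≤ yb i := c4 _ (h.bb i) fun y y1 y2 => bi y y1 (by linarith)
  have cb' : c ≤ yb j := c4 _ (h.bb j) fun y y1 y2 => bj y y1 (by linarith)
  have db : yt i ≤ d := d4 _ (h.bt i) fun y y1 y2 => bi y (by linarith) y2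
  have db' : yt j ≤ d := d4 _ (h.bt j) fun y y1 y2 => bj y (by linarith) y2
  refine ⟨c, d, ⟨⟨⟨by linarith [h.bl i], by linarith [h.br j]⟩, c1, by linarith, d1, ?_⟩, ?_⟩,
    ⟨cb, cb'⟩, db, db'⟩
  · intro y y1 y2
    rcases le_total y p with hy | hy
    · exact c3 y y1 hy
    · exact d3 y hy y2
  · rintro c' d' h1 h2 ⟨-, q1, q2, q3, q4⟩
    have r1 := c4 c' q1 fun y y1 y2 => q4 y y1 (by linarith)
    have r2 := d4 d' q3 fun y y1 y2 => q4 y (by linarith) y2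
    exact ⟨le_antisymm h1 r1, le_antisymm r2 h2⟩

theorem oneV_of_sides [Fintype I] (h : Til xl xr yb yt X1 X2 Y1 Y2)
    (H : ∀ x c d, MaxV xl xr yb yt X1 X2 Y1 Y2 x c d →
      ∃ k, (xl k = x ∨ xr k = x) ∧ yb k = c ∧ yt k = d) : OneV xl xr yb yt := by
  intro i j hij
  obtain ⟨c, d, hm, ⟨h1, h2⟩, h3, h4⟩ := exists_maxV h hij
  obtain ⟨k, hk, k1, k2⟩ := H _ _ _ hm
  obtain ⟨e1, e2, e3⟩ := hij
  have xi := h.hx i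
  have xj := h.hx j
  have xk := h.hx k
  have yi := h.hy i
  have yj := h.hy j
  rcases hk with hk | hk
  · have := h.disj k j (by linarith) (by linarith) (by linarith) (by linarith)
    subst this
    right
    constructor <;> linarith
  · have := h.disj k i (by linarith) (by linarith) (by linarith) (by linarith)
    subst this
    left
    constructor <;> linarith

end Abstract

/-! ### From rectangles as point sets to coordinates -/

section Concrete

variable {I : Type*} [Fintype I]

theorem Rect.mem_toSet {R : Rect} {x y : ℝ} :
    (x, y) ∈ R.toSet ↔ R.x1 ≤ x ∧ x ≤ R.x2 ∧ R.y1 ≤ y ∧ y ≤ R.y2 := by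
  simp only [Rect.toSet, mem_prod, mem_Icc]
  tauto

theorem Rect.mem_interior {R : Rect} {x y : ℝ} :
    (x, y) ∈ interior R.toSet ↔ R.x1 < x ∧ x < R.x2 ∧ R.y1 < y ∧ y < R.y2 := by
  simp only [Rect.toSet, interior_prod_eq, interior_Icc, mem_prod, mem_Ioo]
  tauto

theorem Rect.isClosed_toSet (R : Rect) : IsClosed R.toSet := isClosed_Icc.prod isClosed_Icc

theorem mem_vseg {x c d u v : ℝ} : (u, v) ∈ vseg x c d ↔ u = x ∧ c ≤ v ∧ v ≤ d := by
  simp [vseg]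

theorem mem_hseg {a b y u v : ℝ} : (u, v) ∈ hseg a b y ↔ (a ≤ u ∧ u ≤ b) ∧ v = y := by
  simp [hseg]

theorem leftAdj_iff {A B : Rect} :
    LeftAdj A B ↔ A.x2 = B.x1 ∧ A.y1 < B.y2 ∧ B.y1 < A.y2 := by
  have hA := A.hy
  have hB := B.hy
  have hA' := A.hx
  have hB' := B.hx
  refine and_congr_right fun e => ⟨?_, ?_⟩
  · rintro ⟨c, d, hcd, h⟩
    have h1 : (A.x2, c) ∈ A.toSet ∩ B.toSet := h ▸ mem_vseg.2 ⟨rfl, le_rfl, hcd.le⟩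
    have h2 : (A.x2, d) ∈ A.toSet ∩ B.toSet := h ▸ mem_vseg.2 ⟨rfl, hcd.le, le_rfl⟩
    obtain ⟨-, -, a1, a2⟩ := Rect.mem_toSet.1 h1.1
    obtain ⟨-, -, a3, a4⟩ := Rect.mem_toSet.1 h1.2
    obtain ⟨-, -, a5, a6⟩ := Rect.mem_toSet.1 h2.1
    obtain ⟨-, -, a7, a8⟩ := Rect.mem_toSet.1 h2.2
    constructor <;> linarith
  · rintro ⟨h1, h2⟩
    refine ⟨max A.y1 B.y1, min A.y2 B.y2, max_lt (lt_min hA h1) (lt_min h2 hB), ?_⟩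
    ext ⟨u, v⟩
    simp only [mem_inter_iff, Rect.mem_toSet, mem_vseg, max_le_iff, le_min_iff]
    constructor
    · rintro ⟨⟨a1, a2, a3, a4⟩, b1, b2, b3, b4⟩
      exact ⟨by linarith, ⟨a3, b3⟩, a4, b4⟩
    · rintro ⟨rfl, ⟨a3, b3⟩, a4, b4⟩
      exact ⟨⟨by linarith, by linarith, a3, a4⟩, by linarith, by linarith, b3, b4⟩

theorem belowAdj_iff {A B : Rect} :
    BelowAdj A B ↔ A.y2 = B.y1 ∧ A.x1 < B.x2 ∧ B.x1 < A.x2 := by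
  have hA := A.hy
  have hB := B.hy
  have hA' := A.hx
  have hB' := B.hx
  refine and_congr_right fun e => ⟨?_, ?_⟩
  · rintro ⟨c, d, hcd, h⟩
    have h1 : (c, A.y2) ∈ A.toSet ∩ B.toSet := h ▸ mem_hseg.2 ⟨⟨le_rfl, hcd.le⟩, rfl⟩
    have h2 : (d, A.y2) ∈ A.toSet ∩ B.toSet := h ▸ mem_hseg.2 ⟨⟨hcd.le, le_rfl⟩, rfl⟩
    obtain ⟨a1, a2, -, -⟩ := Rect.mem_toSet.1 h1.1
    obtain ⟨a3, a4, -, -⟩ := Rect.mem_toSet.1 h1.2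
    obtain ⟨a5, a6, -, -⟩ := Rect.mem_toSet.1 h2.1
    obtain ⟨a7, a8, -, -⟩ := Rect.mem_toSet.1 h2.2
    constructor <;> linarith
  · rintro ⟨h1, h2⟩
    refine ⟨max A.x1 B.x1, min A.x2 B.x2, max_lt (lt_min hA' h1) (lt_min h2 hB'), ?_⟩
    ext ⟨u, v⟩
    simp only [mem_inter_iff, Rect.mem_toSet, mem_hseg, max_le_iff, le_min_iff]
    constructor
    · rintro ⟨⟨a1, a2, a3, a4⟩, b1, b2, b3, b4⟩
      exact ⟨⟨⟨a1, b1⟩, a2, b2⟩, by linarith⟩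
    · rintro ⟨⟨⟨a1, b1⟩, a2, b2⟩, rfl⟩
      exact ⟨⟨a1, a2, by linarith, by linarith⟩, b1, b2, by linarith, by linarith⟩

theorem meetsLeft_iff {A F : Rect} (h : F.x1 ≤ A.x1) (h1 : F.y1 ≤ A.y1) (h2 : A.y2 ≤ F.y2) :
    MeetsLeftSide A F ↔ A.x1 = F.x1 := by
  have hA := A.hx
  constructor
  · rintro ⟨c, d, hcd, e⟩
    have h3 : (F.x1, c) ∈ A.toSet ∩ vseg F.x1 F.y1 F.y2 := e ▸ mem_vseg.2 ⟨rfl, le_rfl, hcd.le⟩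
    exact le_antisymm (Rect.mem_toSet.1 h3.1).1 h
  · intro e
    refine ⟨A.y1, A.y2, A.hy, ?_⟩
    ext ⟨u, v⟩
    simp only [mem_inter_iff, Rect.mem_toSet, mem_vseg]
    constructor
    · rintro ⟨⟨a1, a2, a3, a4⟩, rfl, -⟩
      exact ⟨rfl, a3, a4⟩
    · rintro ⟨rfl, a3, a4⟩
      exact ⟨⟨by linarith, by linarith, a3, a4⟩, rfl, by linarith, by linarith⟩

theorem meetsRight_iff {A F : Rect} (h : A.x2 ≤ F.x2) (h1 : F.y1 ≤ A.y1) (h2 : A.y2 ≤ F.y2) :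
    MeetsRightSide A F ↔ A.x2 = F.x2 := by
  have hA := A.hx
  constructor
  · rintro ⟨c, d, hcd, e⟩
    have h3 : (F.x2, c) ∈ A.toSet ∩ vseg F.x2 F.y1 F.y2 := e ▸ mem_vseg.2 ⟨rfl, le_rfl, hcd.le⟩
    exact le_antisymm h (Rect.mem_toSet.1 h3.1).2.1
  · intro e
    refine ⟨A.y1, A.y2, A.hy, ?_⟩
    ext ⟨u, v⟩
    simp only [mem_inter_iff, Rect.mem_toSet, mem_vseg]
    constructor
    · rintro ⟨⟨a1, a2, a3, a4⟩, rfl, -⟩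
      exact ⟨rfl, a3, a4⟩
    · rintro ⟨rfl, a3, a4⟩
      exact ⟨⟨by linarith, by linarith, a3, a4⟩, rfl, by linarith, by linarith⟩

theorem meetsBottom_iff {A F : Rect} (h : F.y1 ≤ A.y1) (h1 : F.x1 ≤ A.x1) (h2 : A.x2 ≤ F.x2) :
    MeetsBottomSide A F ↔ A.y1 = F.y1 := by
  have hA := A.hy
  constructor
  · rintro ⟨c, d, hcd, e⟩
    have h3 : (c, F.y1) ∈ A.toSet ∩ hseg F.x1 F.x2 F.y1 := e ▸ mem_hseg.2 ⟨⟨le_rfl, hcd.le⟩, rfl⟩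
    exact le_antisymm (Rect.mem_toSet.1 h3.1).2.2.1 h
  · intro e
    refine ⟨A.x1, A.x2, A.hx, ?_⟩
    ext ⟨u, v⟩
    simp only [mem_inter_iff, Rect.mem_toSet, mem_hseg]
    constructor
    · rintro ⟨⟨a1, a2, a3, a4⟩, -, rfl⟩
      exact ⟨⟨a1, a2⟩, rfl⟩
    · rintro ⟨⟨a3, a4⟩, rfl⟩
      exact ⟨⟨a3, a4, by linarith, by linarith⟩, ⟨by linarith, by linarith⟩, rfl⟩

theorem meetsTop_iff {A F : Rect} (h : A.y2 ≤ F.y2) (h1 : F.x1 ≤ A.x1) (h2 : A.x2 ≤ F.x2) :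
    MeetsTopSide A F ↔ A.y2 = F.y2 := by
  have hA := A.hy
  constructor
  · rintro ⟨c, d, hcd, e⟩
    have h3 : (c, F.y2) ∈ A.toSet ∩ hseg F.x1 F.x2 F.y2 := e ▸ mem_hseg.2 ⟨⟨le_rfl, hcd.le⟩, rfl⟩
    exact le_antisymm h (Rect.mem_toSet.1 h3.1).2.2.2
  · intro e
    refine ⟨A.x1, A.x2, A.hx, ?_⟩
    ext ⟨u, v⟩
    simp only [mem_inter_iff, Rect.mem_toSet, mem_hseg]
    constructor
    · rintro ⟨⟨a1, a2, a3, a4⟩, -, rfl⟩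
      exact ⟨⟨a1, a2⟩, rfl⟩
    · rintro ⟨⟨a3, a4⟩, rfl⟩
      exact ⟨⟨a3, a4, by linarith, by linarith⟩, ⟨by linarith, by linarith⟩, rfl⟩

theorem Tiling.exists_mem (T : Tiling I) {x y : ℝ} (h : (x, y) ∈ T.F.toSet) :
    ∃ i, (x, y) ∈ (T.R i).toSet := by
  rw [← T.union] at h
  exact mem_iUnion.1 h

theorem Tiling.subset (T : Tiling I) (i : I) : (T.R i).toSet ⊆ T.F.toSet := by
  rw [← T.union]
  exact subset_iUnion (fun i => (T.R i).toSet) i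

/-- If a ray from `(x, y)` starts out inside the bounding rectangle, some rectangle contains points
of the ray arbitrarily close to `(x, y)`. -/
theorem Tiling.exists_ray (T : Tiling I) {x y s t ρ : ℝ} (hρ : 0 < ρ)
    (h : ∀ ε, 0 < ε → ε < ρ → (x + ε * s, y + ε * t) ∈ T.F.toSet) :
    ∃ i, ∀ δ, 0 < δ → ∃ ε, 0 < ε ∧ ε < δ ∧ (x + ε * s, y + ε * t) ∈ (T.R i).toSet := by
  by_contra! hcon
  choose δ hδ hmem using hcon
  have h1 : ∀ᶠ ε in nhdsWithin (0 : ℝ) (Ioi 0), ∀ i, ε ∈ Ioo 0 (δ i) :=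
    Filter.eventually_all.2 fun i => Ioo_mem_nhdsGT (hδ i)
  have h2 : ∀ᶠ ε in nhdsWithin (0 : ℝ) (Ioi 0), ε ∈ Ioo 0 ρ := Ioo_mem_nhdsGT hρ
  obtain ⟨ε, e1, e2⟩ := (h1.and h2).exists
  obtain ⟨i, hi⟩ := T.exists_mem (h ε e2.1 e2.2)
  exact hmem i ε (e1 i).1 (e1 i).2 hi

/-- A closed inequality that holds at points of a ray arbitrarily close to its origin holds at the
origin. -/
theorem ge_of_small {a b : ℝ} (h : ∀ δ, 0 < δ → ∃ ε, 0 < ε ∧ ε < δ ∧ a ≤ b + ε) : a ≤ b := by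
  by_contra hcon
  obtain ⟨ε, e1, e2, e3⟩ := h (a - b) (by linarith)
  linarith

theorem tiling_til (T : Tiling I) : Til (fun i => (T.R i).x1) (fun i => (T.R i).x2)
    (fun i => (T.R i).y1) (fun i => (T.R i).y2) T.F.x1 T.F.x2 T.F.y1 T.F.y2 := by
  have lo : ∀ i, ((T.R i).x1, (T.R i).y1) ∈ T.F.toSet := fun i =>
    T.subset i (Rect.mem_toSet.2 ⟨le_rfl, (T.R i).hx.le, le_rfl, (T.R i).hy.le⟩)
  have hi : ∀ i, ((T.R i).x2, (T.R i).y2) ∈ T.F.toSet := fun i =>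
    T.subset i (Rect.mem_toSet.2 ⟨(T.R i).hx.le, le_rfl, (T.R i).hy.le, le_rfl⟩)
  refine
    { hX := T.F.hx
      hY := T.F.hy
      hx := fun i => (T.R i).hx
      hy := fun i => (T.R i).hy
      bl := fun i => (Rect.mem_toSet.1 (lo i)).1
      br := fun i => (Rect.mem_toSet.1 (hi i)).2.1
      bb := fun i => (Rect.mem_toSet.1 (lo i)).2.2.1
      bt := fun i => (Rect.mem_toSet.1 (hi i)).2.2.2
      disj := ?_, ne := ?_, nw := ?_, se := ?_, sw := ?_ }
  · intro i j h1 h2 h3 h4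
    by_contra hne
    obtain ⟨x, x1, x2⟩ := exists_between
      (max_lt (lt_min (T.R i).hx h1) (lt_min h2 (T.R j).hx))
    obtain ⟨y, y1, y2⟩ := exists_between
      (max_lt (lt_min (T.R i).hy h3) (lt_min h4 (T.R j).hy))
    rw [max_lt_iff] at x1 y1
    rw [lt_min_iff] at x2 y2
    have : (x, y) ∈ interior (T.R i).toSet ∩ interior (T.R j).toSet :=
      ⟨Rect.mem_interior.2 ⟨x1.1, x2.1, y1.1, y2.1⟩, Rect.mem_interior.2 ⟨x1.2, x2.2, y1.2, y2.2⟩⟩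
    rw [T.disj hne] at this
    exact this
  all_goals intro x y h1 h2 h3 h4
  · obtain ⟨i, hi⟩ := T.exists_ray (x := x) (y := y) (s := 1) (t := 1)
      (lt_min (sub_pos.2 h2) (sub_pos.2 h4)) (fun ε e1 e2 => by
        rw [lt_min_iff] at e2
        exact Rect.mem_toSet.2 ⟨by linarith, by linarith, by linarith, by linarith⟩)
    simp only [Rect.mem_toSet] at hi
    obtain ⟨ε, e1, -, e3, e4, e5, e6⟩ := hi 1 one_pos
    refine ⟨i, ?_, by linarith, ?_, by linarith⟩
    · exact ge_of_small fun δ hδ => (hi δ hδ).imp fun η h => ⟨h.1, h.2.1, by linarith [h.2.2.1]⟩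
    · exact ge_of_small fun δ hδ => (hi δ hδ).imp fun η h => ⟨h.1, h.2.1, by linarith [h.2.2.2.2.1]⟩
  · obtain ⟨i, hi⟩ := T.exists_ray (x := x) (y := y) (s := -1) (t := 1)
      (lt_min (sub_pos.2 h1) (sub_pos.2 h4)) (fun ε e1 e2 => by
        rw [lt_min_iff] at e2
        exact Rect.mem_toSet.2 ⟨by linarith, by linarith, by linarith, by linarith⟩)
    simp only [Rect.mem_toSet] at hi
    obtain ⟨ε, e1, -, e3, e4, e5, e6⟩ := hi 1 one_pos
    refine ⟨i, by linarith, ?_, ?_, by linarith⟩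
    · exact ge_of_small fun δ hδ => (hi δ hδ).imp fun η h => ⟨h.1, h.2.1, by linarith [h.2.2.2.1]⟩
    · exact ge_of_small fun δ hδ => (hi δ hδ).imp fun η h => ⟨h.1, h.2.1, by linarith [h.2.2.2.2.1]⟩
  · obtain ⟨i, hi⟩ := T.exists_ray (x := x) (y := y) (s := 1) (t := -1)
      (lt_min (sub_pos.2 h2) (sub_pos.2 h3)) (fun ε e1 e2 => by
        rw [lt_min_iff] at e2
        exact Rect.mem_toSet.2 ⟨by linarith, by linarith, by linarith, by linarith⟩)
    simp only [Rect.mem_toSet] at hi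
    obtain ⟨ε, e1, -, e3, e4, e5, e6⟩ := hi 1 one_pos
    refine ⟨i, ?_, by linarith, by linarith, ?_⟩
    · exact ge_of_small fun δ hδ => (hi δ hδ).imp fun η h => ⟨h.1, h.2.1, by linarith [h.2.2.1]⟩
    · exact ge_of_small fun δ hδ => (hi δ hδ).imp fun η h => ⟨h.1, h.2.1, by linarith [h.2.2.2.2.2]⟩
  · obtain ⟨i, hi⟩ := T.exists_ray (x := x) (y := y) (s := -1) (t := -1)
      (lt_min (sub_pos.2 h1) (sub_pos.2 h3)) (fun ε e1 e2 => by
        rw [lt_min_iff] at e2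
        exact Rect.mem_toSet.2 ⟨by linarith, by linarith, by linarith, by linarith⟩)
    simp only [Rect.mem_toSet] at hi
    obtain ⟨ε, e1, -, e3, e4, e5, e6⟩ := hi 1 one_pos
    refine ⟨i, by linarith, ?_, by linarith, ?_⟩
    · exact ge_of_small fun δ hδ => (hi δ hδ).imp fun η h => ⟨h.1, h.2.1, by linarith [h.2.2.2.1]⟩
    · exact ge_of_small fun δ hδ => (hi δ hδ).imp fun η h => ⟨h.1, h.2.1, by linarith [h.2.2.2.2.2]⟩

theorem tiling_gen {T : Tiling I} (hg : Generic T) : Gen (fun i => (T.R i).x1)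
    (fun i => (T.R i).x2) (fun i => (T.R i).y1) (fun i => (T.R i).y2) := by
  classical
  intro x y i j k l h1 h2 h3 h4 h5 h6 hm
  have := hg (x, y) {i, j, k, l} (fun m h => Rect.mem_toSet.2 (hm m (by simpa using h)))
  rw [Finset.card_insert_of_notMem (by simp [h1, h2, h3]),
    Finset.card_insert_of_notMem (by simp [h4, h5]),
    Finset.card_insert_of_notMem (by simp [h6]), Finset.card_singleton] at this
  omega

/-! ### Internal segments in coordinates -/

theorem mem_bd_iff (T : Tiling I) {x y : ℝ} :
    (x, y) ∈ (⋃ i, frontier (T.R i).toSet) ↔ Bd (fun i => (T.R i).x1) (fun i => (T.R i).x2)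
      (fun i => (T.R i).y1) (fun i => (T.R i).y2) x y := by
  rw [mem_iUnion]
  refine exists_congr fun i => ?_
  rw [(T.R i).isClosed_toSet.frontier_eq, mem_sdiff, Rect.mem_toSet, Rect.mem_interior]
  refine and_congr_right fun _ => ?_
  simp only [not_and_or, not_lt]

theorem Icc_of_Ioo {a b c d : ℝ} (hcd : c < d) (h : ∀ y, c < y → y < d → a < y ∧ y < b) :
    a ≤ c ∧ d ≤ b := by
  constructor
  · refine le_of_forall_gt_imp_ge_of_dense fun z hz => ?_
    obtain ⟨y, y1, y2⟩ := exists_between (lt_min hz hcd)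
    rw [lt_min_iff] at y2
    exact ((h y y1 y2.2).1.trans y2.1).le
  · refine le_of_forall_lt_imp_le_of_dense fun z hz => ?_
    obtain ⟨y, y1, y2⟩ := exists_between (max_lt hz hcd)
    rw [max_lt_iff] at y1
    exact (y1.1.trans (h y y1.2 y2).2).le

theorem intV_iff (T : Tiling I) {x c d : ℝ} :
    IntV (fun i => (T.R i).x1) (fun i => (T.R i).x2) (fun i => (T.R i).y1) (fun i => (T.R i).y2)
      T.F.x1 T.F.x2 T.F.y1 T.F.y2 x c d ↔ c < d ∧
      vseg x c d ⊆ (⋃ i, frontier (T.R i).toSet) ∧ vsegOpen x c d ⊆ interior T.F.toSet := by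
  constructor
  · rintro ⟨⟨h1, h2⟩, h3, h4, h5, h6⟩
    refine ⟨h4, ?_, ?_⟩
    · rintro ⟨u, v⟩ h
      obtain ⟨rfl, h7, h8⟩ := mem_vseg.1 h
      exact (mem_bd_iff T).2 (h6 v h7 h8)
    · rintro ⟨u, v⟩ ⟨h, h7, h8⟩
      obtain rfl : u = x := h
      exact Rect.mem_interior.2 ⟨h1, h2, h3.trans_lt h7, lt_of_lt_of_le h8 h5⟩
  · rintro ⟨hcd, h1, h2⟩
    have h3 : ∀ y, c < y → y < d → T.F.x1 < x ∧ x < T.F.x2 ∧ T.F.y1 < y ∧ y < T.F.y2 :=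
      fun y y1 y2 => Rect.mem_interior.1 (h2 ⟨rfl, y1, y2⟩)
    obtain ⟨h4, h5⟩ := Icc_of_Ioo hcd fun y y1 y2 => (h3 y y1 y2).2.2
    obtain ⟨y, y1, y2⟩ := exists_between hcd
    exact ⟨⟨(h3 y y1 y2).1, (h3 y y1 y2).2.1⟩, h4, hcd, h5,
      fun y y1 y2 => (mem_bd_iff T).1 (h1 (mem_vseg.2 ⟨rfl, y1, y2⟩))⟩

theorem intH_iff (T : Tiling I) {y a b : ℝ} :
    IntV (fun i => (T.R i).y1) (fun i => (T.R i).y2) (fun i => (T.R i).x1) (fun i => (T.R i).x2)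
      T.F.y1 T.F.y2 T.F.x1 T.F.x2 y a b ↔ a < b ∧
      hseg a b y ⊆ (⋃ i, frontier (T.R i).toSet) ∧ hsegOpen a b y ⊆ interior T.F.toSet := by
  constructor
  · rintro ⟨⟨h1, h2⟩, h3, h4, h5, h6⟩
    refine ⟨h4, ?_, ?_⟩
    · rintro ⟨u, v⟩ h
      obtain ⟨⟨h7, h8⟩, rfl⟩ := mem_hseg.1 h
      exact (mem_bd_iff T).2 (bd_swap (h6 u h7 h8))
    · rintro ⟨u, v⟩ ⟨⟨h7, h8⟩, h⟩
      obtain rfl : v = y := h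
      exact Rect.mem_interior.2 ⟨h3.trans_lt h7, lt_of_lt_of_le h8 h5, h1, h2⟩
  · rintro ⟨hab, h1, h2⟩
    have h3 : ∀ x, a < x → x < b → T.F.x1 < x ∧ x < T.F.x2 ∧ T.F.y1 < y ∧ y < T.F.y2 :=
      fun x x1 x2 => Rect.mem_interior.1 (h2 ⟨⟨x1, x2⟩, rfl⟩)
    obtain ⟨h4, h5⟩ := Icc_of_Ioo hab fun x x1 x2 => ⟨(h3 x x1 x2).1, (h3 x x1 x2).2.1⟩
    obtain ⟨x, x1, x2⟩ := exists_between hab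
    exact ⟨⟨(h3 x x1 x2).2.2.1, (h3 x x1 x2).2.2.2⟩, h4, hab, h5,
      fun x x1 x2 => bd_swap ((mem_bd_iff T).1 (h1 (mem_hseg.2 ⟨⟨x1, x2⟩, rfl⟩)))⟩

theorem isInternalSeg_iff (T : Tiling I) {S : Set (ℝ × ℝ)} : IsInternalSeg T S ↔
    (∃ x c d, S = vseg x c d ∧ IntV (fun i => (T.R i).x1) (fun i => (T.R i).x2)
      (fun i => (T.R i).y1) (fun i => (T.R i).y2) T.F.x1 T.F.x2 T.F.y1 T.F.y2 x c d) ∨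
    (∃ y a b, S = hseg a b y ∧ IntV (fun i => (T.R i).y1) (fun i => (T.R i).y2)
      (fun i => (T.R i).x1) (fun i => (T.R i).x2) T.F.y1 T.F.y2 T.F.x1 T.F.x2 y a b) := by
  constructor
  · rintro (⟨x, c, d, h1, rfl, h2, h3⟩ | ⟨a, b, y, h1, rfl, h2, h3⟩)
    · exact Or.inl ⟨x, c, d, rfl, (intV_iff T).2 ⟨h1, h2, h3⟩⟩
    · exact Or.inr ⟨y, a, b, rfl, (intH_iff T).2 ⟨h1, h2, h3⟩⟩
  · rintro (⟨x, c, d, rfl, h⟩ | ⟨y, a, b, rfl, h⟩)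
    · obtain ⟨h1, h2, h3⟩ := (intV_iff T).1 h
      exact Or.inl ⟨x, c, d, h1, rfl, h2, h3⟩
    · obtain ⟨h1, h2, h3⟩ := (intH_iff T).1 h
      exact Or.inr ⟨a, b, y, h1, rfl, h2, h3⟩

theorem vseg_subset {x c d x' c' d' : ℝ} (h : c < d) (hs : vseg x c d ⊆ vseg x' c' d') :
    x = x' ∧ c' ≤ c ∧ d ≤ d' := by
  have h1 := mem_vseg.1 (hs (mem_vseg.2 ⟨rfl, le_rfl, h.le⟩))
  have h2 := mem_vseg.1 (hs (mem_vseg.2 ⟨rfl, h.le, le_rfl⟩))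
  exact ⟨h1.1, h1.2.1, h2.2.2⟩

theorem hseg_subset {y a b y' a' b' : ℝ} (h : a < b) (hs : hseg a b y ⊆ hseg a' b' y') :
    y = y' ∧ a' ≤ a ∧ b ≤ b' := by
  have h1 := mem_hseg.1 (hs (mem_hseg.2 ⟨⟨le_rfl, h.le⟩, rfl⟩))
  have h2 := mem_hseg.1 (hs (mem_hseg.2 ⟨⟨h.le, le_rfl⟩, rfl⟩))
  exact ⟨h1.2, h1.1.1, h2.1.2⟩

theorem not_vseg_subset_hseg {x c d a b y : ℝ} (h : c < d) : ¬ vseg x c d ⊆ hseg a b y := by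
  intro hs
  have h1 := mem_hseg.1 (hs (mem_vseg.2 ⟨rfl, le_rfl, h.le⟩))
  have h2 := mem_hseg.1 (hs (mem_vseg.2 ⟨rfl, h.le, le_rfl⟩))
  exact h.ne (h1.2.trans h2.2.symm)

theorem not_hseg_subset_vseg {x c d a b y : ℝ} (h : a < b) : ¬ hseg a b y ⊆ vseg x c d := by
  intro hs
  have h1 := mem_vseg.1 (hs (mem_hseg.2 ⟨⟨le_rfl, h.le⟩, rfl⟩))
  have h2 := mem_vseg.1 (hs (mem_hseg.2 ⟨⟨h.le, le_rfl⟩, rfl⟩))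
  exact h.ne (h1.1.trans h2.1.symm)

theorem isMaxInternalSeg_vseg_iff (T : Tiling I) {x c d : ℝ} (hcd : c < d) :
    IsMaxInternalSeg T (vseg x c d) ↔ MaxV (fun i => (T.R i).x1) (fun i => (T.R i).x2)
      (fun i => (T.R i).y1) (fun i => (T.R i).y2) T.F.x1 T.F.x2 T.F.y1 T.F.y2 x c d := by
  constructor
  · rintro ⟨h1, h2⟩
    refine ⟨?_, fun c' d' hc hd hi => ?_⟩
    · rcases (isInternalSeg_iff T).1 h1 with ⟨x', c', d', e, h⟩ | ⟨y', a', b', e, h⟩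
      · obtain ⟨rfl, e1, e2⟩ := vseg_subset hcd e.subset
        obtain ⟨-, e3, e4⟩ := vseg_subset h.2.2.1 e.symm.subset
        rwa [le_antisymm e3 e1, le_antisymm e2 e4]
      · exact absurd e.subset (not_vseg_subset_hseg hcd)
    · have := h2 _ ((isInternalSeg_iff T).2 (Or.inl ⟨x, c', d', rfl, hi⟩)) fun ⟨u, v⟩ h => by
        obtain ⟨h3, h4, h5⟩ := mem_vseg.1 h
        exact mem_vseg.2 ⟨h3, hc.trans h4, h5.trans hd⟩
      obtain ⟨-, e1, e2⟩ := vseg_subset hi.2.2.1 this.subset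
      exact ⟨le_antisymm hc e1, le_antisymm e2 hd⟩
  · rintro ⟨h1, h2⟩
    refine ⟨(isInternalSeg_iff T).2 (Or.inl ⟨x, c, d, rfl, h1⟩), fun S' hS' hs => ?_⟩
    rcases (isInternalSeg_iff T).1 hS' with ⟨x', c', d', rfl, h⟩ | ⟨y', a', b', rfl, h⟩
    · obtain ⟨rfl, e1, e2⟩ := vseg_subset hcd hs
      obtain ⟨rfl, rfl⟩ := h2 _ _ e1 e2 h
      rfl
    · exact absurd hs (not_vseg_subset_hseg hcd)

theorem isMaxInternalSeg_hseg_iff (T : Tiling I) {y a b : ℝ} (hab : a < b) :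
    IsMaxInternalSeg T (hseg a b y) ↔ MaxV (fun i => (T.R i).y1) (fun i => (T.R i).y2)
      (fun i => (T.R i).x1) (fun i => (T.R i).x2) T.F.y1 T.F.y2 T.F.x1 T.F.x2 y a b := by
  constructor
  · rintro ⟨h1, h2⟩
    refine ⟨?_, fun a' b' ha hb hi => ?_⟩
    · rcases (isInternalSeg_iff T).1 h1 with ⟨x', c', d', e, h⟩ | ⟨y', a', b', e, h⟩
      · exact absurd e.subset (not_hseg_subset_vseg hab)
      · obtain ⟨rfl, e1, e2⟩ := hseg_subset hab e.subset
        obtain ⟨-, e3, e4⟩ := hseg_subset h.2.2.1 e.symm.subset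
        rwa [le_antisymm e3 e1, le_antisymm e2 e4]
    · have := h2 _ ((isInternalSeg_iff T).2 (Or.inr ⟨y, a', b', rfl, hi⟩)) fun ⟨u, v⟩ h => by
        obtain ⟨⟨h4, h5⟩, h3⟩ := mem_hseg.1 h
        exact mem_hseg.2 ⟨⟨ha.trans h4, h5.trans hb⟩, h3⟩
      obtain ⟨-, e1, e2⟩ := hseg_subset hi.2.2.1 this.subset
      exact ⟨le_antisymm ha e1, le_antisymm e2 hb⟩
  · rintro ⟨h1, h2⟩
    refine ⟨(isInternalSeg_iff T).2 (Or.inr ⟨y, a, b, rfl, h1⟩), fun S' hS' hs => ?_⟩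
    rcases (isInternalSeg_iff T).1 hS' with ⟨x', c', d', rfl, h⟩ | ⟨y', a', b', rfl, h⟩
    · exact absurd hs (not_hseg_subset_vseg hab)
    · obtain ⟨rfl, e1, e2⟩ := hseg_subset hab hs
      obtain ⟨rfl, rfl⟩ := h2 _ _ e1 e2 h
      rfl

theorem isSide_vseg_iff {R : Rect} {x c d : ℝ} (hcd : c < d) :
    R.IsSide (vseg x c d) ↔ (R.x1 = x ∨ R.x2 = x) ∧ R.y1 = c ∧ R.y2 = d := by
  constructor
  · rintro (e | e | e | e)
    · obtain ⟨rfl, e1, e2⟩ := vseg_subset hcd e.subset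
      obtain ⟨-, e3, e4⟩ := vseg_subset R.hy e.symm.subset
      exact ⟨Or.inl rfl, le_antisymm e1 e3, le_antisymm e4 e2⟩
    · obtain ⟨rfl, e1, e2⟩ := vseg_subset hcd e.subset
      obtain ⟨-, e3, e4⟩ := vseg_subset R.hy e.symm.subset
      exact ⟨Or.inr rfl, le_antisymm e1 e3, le_antisymm e4 e2⟩
    all_goals exact absurd e.subset (not_vseg_subset_hseg hcd)
  · rintro ⟨rfl | rfl, rfl, rfl⟩
    · exact Or.inl rfl
    · exact Or.inr (Or.inl rfl)

theorem isSide_hseg_iff {R : Rect} {y a b : ℝ} (hab : a < b) :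
    R.IsSide (hseg a b y) ↔ (R.y1 = y ∨ R.y2 = y) ∧ R.x1 = a ∧ R.x2 = b := by
  constructor
  · rintro (e | e | e | e)
    iterate 2 exact absurd e.subset (not_hseg_subset_vseg hab)
    · obtain ⟨rfl, e1, e2⟩ := hseg_subset hab e.subset
      obtain ⟨-, e3, e4⟩ := hseg_subset R.hx e.symm.subset
      exact ⟨Or.inl rfl, le_antisymm e1 e3, le_antisymm e4 e2⟩
    · obtain ⟨rfl, e1, e2⟩ := hseg_subset hab e.subset
      obtain ⟨-, e3, e4⟩ := hseg_subset R.hx e.symm.subset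
      exact ⟨Or.inr rfl, le_antisymm e1 e3, le_antisymm e4 e2⟩
  · rintro ⟨rfl | rfl, rfl, rfl⟩
    · exact Or.inr (Or.inr (Or.inl rfl))
    · exact Or.inr (Or.inr (Or.inr rfl))

end Concrete

/-! ### The obstruction survives weak equivalence -/

theorem BadV.transfer {I : Type*} {xl xr yb yt xl' xr' yb' yt' : I → ℝ}
    (hv : ∀ i j, LAdj xl xr yb yt i j → LAdj xl' xr' yb' yt' i j)
    (hh : ∀ i j, LAdj yb yt xl xr i j → LAdj yb' yt' xl' xr' i j) {p q : I}
    (hb : BadV xl xr yb yt p q) : xr' p ≤ xl' q ∧ yt' p ≤ yb' q := by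
  obtain ⟨a, e, h1, h2, h3, h4, h5⟩ := hb
  obtain ⟨a1, -⟩ := hh _ _ h1
  obtain ⟨a2, -⟩ := hh _ _ h2
  obtain ⟨a3, a4, -⟩ := hv _ _ h3
  obtain ⟨a5, -⟩ := hv _ _ h4
  obtain ⟨a6, -⟩ := hv _ _ h5
  constructor <;> linarith

theorem BadV.transfer_neg {I : Type*} {xl xr yb yt xl' xr' yb' yt' : I → ℝ}
    (hv : ∀ i j, LAdj xl xr yb yt i j → LAdj xl' xr' yb' yt' i j)
    (hh : ∀ i j, LAdj yb yt xl xr i j → LAdj yb' yt' xl' xr' i j) {p q : I}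
    (hb : BadV (fun i => -xr i) (fun i => -xl i) yb yt p q) : xr' q ≤ xl' p ∧ yt' p ≤ yb' q := by
  have := BadV.transfer (xl' := fun i => -xr' i) (xr' := fun i => -xl' i) (yb' := yb') (yt' := yt')
    (fun i j hij => ladj_negx.2 (hv _ _ (ladj_negx.1 hij)))
    (fun i j hij => ladj_negy.2 (hh _ _ (ladj_negy.1 hij))) hb
  exact ⟨neg_le_neg_iff.1 this.1, this.2⟩

/-! ### One-sided segments imply area-universality -/

section Main

variable {I : Type*} [Fintype I]

/-- Horizontal and vertical configurations of a generic tiling with one-sided vertical contacts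
assemble to a rectangular tiling. -/
theorem exists_tiling_of_cfg {xl xr yb yt : I → ℝ} {X1 X2 Y1 Y2 : ℝ}
    (h : Til xl xr yb yt X1 X2 Y1 Y2) (g : Gen xl xr yb yt) (o : OneV xl xr yb yt)
    {l r b t : I → ℝ} {L R B T : ℝ} (hx : Cfg xl xr yb yt X1 X2 l r L R)
    (hy : Cfg yb yt xl xr Y1 Y2 b t B T) :
    ∃ T' : Tiling I, T'.F.x1 = L ∧ T'.F.x2 = R ∧ T'.F.y1 = B ∧ T'.F.y2 = T ∧
      ∀ i, (T'.R i).x1 = l i ∧ (T'.R i).x2 = r i ∧ (T'.R i).y1 = b i ∧ (T'.R i).y2 = t i := by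
  have bl := left_bound h (fun i => (hx.pos i).le) hx.adj hx.left
  have br := right_bound h (fun i => (hx.pos i).le) hx.adj hx.right
  have bb := left_bound h.swap (fun i => (hy.pos i).le) hy.adj hy.left
  have bt := right_bound h.swap (fun i => (hy.pos i).le) hy.adj hy.right
  obtain ⟨i₀, -⟩ := h.ne X1 Y1 le_rfl h.hX le_rfl h.hY
  have hLR : L < R := (bl i₀).trans_lt ((hx.pos i₀).trans_le (br i₀))
  have hBT : B < T := (bb i₀).trans_lt ((hy.pos i₀).trans_le (bt i₀))
  refine ⟨{
    R := fun i => ⟨l i, r i, b i, t i, hx.pos i, hy.pos i⟩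
    F := ⟨L, R, B, T, hLR, hBT⟩
    disj := fun i j hij => ?_
    union := ?_ }, rfl, rfl, rfl, rfl, fun i => ⟨rfl, rfl, rfl, rfl⟩⟩
  · refine eq_empty_iff_forall_notMem.2 ?_
    rintro ⟨x, y⟩ ⟨h1, h2⟩
    obtain ⟨a1, a2, a3, a4⟩ := Rect.mem_interior.1 h1
    obtain ⟨c1, c2, c3, c4⟩ := Rect.mem_interior.1 h2
    dsimp only at a1 a2 a3 a4 c1 c2 c3 c4
    exact hij ((cfg_cover h g o hx hy hLR.le hBT.le ((bl i).trans a1.le) (a2.trans_le (br i))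
      ((bb i).trans a3.le) (a4.trans_le (bt i))).unique
      ⟨⟨a3.le, a4⟩, a1.le, a2⟩ ⟨⟨c3.le, c4⟩, c1.le, c2⟩)
  · refine Subset.antisymm (iUnion_subset fun i => ?_) ?_
    · rintro ⟨x, y⟩ hxy
      obtain ⟨a1, a2, a3, a4⟩ := Rect.mem_toSet.1 hxy
      exact Rect.mem_toSet.2 ⟨(bl i).trans a1, a2.trans (br i), (bb i).trans a3, a4.trans (bt i)⟩
    · -- the half-open bounding rectangle is covered, and the union of the rectangles is closed
      have hcl : IsClosed (⋃ i, Rect.toSet ⟨l i, r i, b i, t i, hx.pos i, hy.pos i⟩) :=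
        isClosed_iUnion_of_finite fun i => Rect.isClosed_toSet _
      have hsub : Ico L R ×ˢ Ico B T ⊆
          ⋃ i, Rect.toSet ⟨l i, r i, b i, t i, hx.pos i, hy.pos i⟩ := by
        rintro ⟨x, y⟩ ⟨⟨a1, a2⟩, a3, a4⟩
        obtain ⟨i, ⟨⟨c1, c2⟩, c3, c4⟩, -⟩ := cfg_cover h g o hx hy hLR.le hBT.le a1 a2 a3 a4
        exact mem_iUnion.2 ⟨i, Rect.mem_toSet.2 ⟨c3, c4.le, c1, c2.le⟩⟩
      have := hcl.closure_subset_iff.2 hsub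
      rwa [closure_prod_eq, closure_Ico hLR.ne, closure_Ico hBT.ne] at this

theorem areaUniversal_of_sides (T : Tiling I) (hgen : Generic T)
    (H : ∀ S : Set (ℝ × ℝ), IsMaxInternalSeg T S → ∃ i : I, (T.R i).IsSide S) :
    AreaUniversal T := by
  have h := tiling_til T
  have g := tiling_gen hgen
  have o1 : OneV (fun i => (T.R i).x1) (fun i => (T.R i).x2) (fun i => (T.R i).y1)
      (fun i => (T.R i).y2) := oneV_of_sides h fun x c d hm =>
    (H _ ((isMaxInternalSeg_vseg_iff T hm.1.2.2.1).2 hm)).imp fun i hi =>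
      (isSide_vseg_iff hm.1.2.2.1).1 hi
  have o2 : OneV (fun i => (T.R i).y1) (fun i => (T.R i).y2) (fun i => (T.R i).x1)
      (fun i => (T.R i).x2) := oneV_of_sides h.swap fun x c d hm =>
    (H _ ((isMaxInternalSeg_hseg_iff T hm.1.2.2.1).2 hm)).imp fun i hi =>
      (isSide_hseg_iff hm.1.2.2.1).1 hi
  intro w hw
  obtain ⟨l, r, hx, hflow⟩ := exists_flow h w hw
  obtain ⟨b, t, Y, hy, hf⟩ := exists_dual h (fun i => w i / (r i - l i))
    (fun i => div_pos (hw i) (sub_pos.2 (hx.pos i))) hflow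
  obtain ⟨T', f1, f2, f3, f4, hR⟩ := exists_tiling_of_cfg h g o1 hx hy
  have h' := tiling_til T'
  have dj := h'.disj
  have dj' := h'.swap.disj
  simp only [hR] at dj dj'
  refine ⟨T', ⟨fun i j => ?_, fun i j => ?_, fun i => ?_, fun i => ?_, fun i => ?_, fun i => ?_⟩,
    fun i => ?_⟩
  · rw [leftAdj_iff, leftAdj_iff, (hR i).2.1, (hR j).1, (hR i).2.2.1, (hR j).2.2.2, (hR j).2.2.1,
      (hR i).2.2.2]
    exact cfg_ladj_iff h g o1 hx hy dj i j
  · rw [belowAdj_iff, belowAdj_iff, (hR i).2.1, (hR j).1, (hR i).2.2.2, (hR j).2.2.1, (hR i).1,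
      (hR j).2.1]
    exact cfg_ladj_iff h.swap g.swap o2 hy hx dj' i j
  · rw [meetsLeft_iff (h.bl i) (h.bb i) (h.bt i), meetsLeft_iff (h'.bl i) (h'.bb i) (h'.bt i),
      (hR i).1, f1]
    exact cfg_left_iff h hx i
  · rw [meetsRight_iff (h.br i) (h.bb i) (h.bt i), meetsRight_iff (h'.br i) (h'.bb i) (h'.bt i),
      (hR i).2.1, f2]
    exact cfg_right_iff h hx i
  · rw [meetsTop_iff (h.bt i) (h.bl i) (h.br i), meetsTop_iff (h'.bt i) (h'.bl i) (h'.br i),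
      (hR i).2.2.2, f4]
    exact cfg_right_iff h.swap hy i
  · rw [meetsBottom_iff (h.bb i) (h.bl i) (h.br i), meetsBottom_iff (h'.bb i) (h'.bl i) (h'.br i),
      (hR i).2.2.1, f3]
    exact cfg_left_iff h.swap hy i
  · rw [Rect.area, (hR i).1, (hR i).2.1, (hR i).2.2.1, (hR i).2.2.2, hf i]
    exact mul_div_cancel₀ _ (sub_pos.2 (hx.pos i)).ne'

/-! ### Area-universality implies that maximal segments are sides -/

/-- The projections of the rectangles `p` and `q` to both axes do not overlap. -/
def DiagSep (T : Tiling I) (p q : I) : Prop :=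
  ((T.R p).x2 ≤ (T.R q).x1 ∨ (T.R q).x2 ≤ (T.R p).x1) ∧
  ((T.R p).y2 ≤ (T.R q).y1 ∨ (T.R q).y2 ≤ (T.R p).y1)

/-- The bounding rectangle has at most the total area of the tiles. -/
theorem area_le_sum (T : Tiling I) : T.F.area ≤ ∑ i, (T.R i).area := by
  have hvol : ∀ R : Rect, MeasureTheory.volume R.toSet = ENNReal.ofReal R.area := by
    intro R
    rw [Rect.toSet, MeasureTheory.Measure.volume_eq_prod, MeasureTheory.Measure.prod_prod,
      Real.volume_Icc, Real.volume_Icc, Rect.area, ENNReal.ofReal_mul (sub_pos.2 R.hx).le]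
  have hpos : ∀ R : Rect, 0 ≤ R.area := fun R =>
    mul_nonneg (sub_pos.2 R.hx).le (sub_pos.2 R.hy).le
  have h1 : MeasureTheory.volume T.F.toSet ≤ ∑ i, MeasureTheory.volume (T.R i).toSet := by
    rw [← T.union]
    exact MeasureTheory.measure_iUnion_fintype_le _ _
  simp only [hvol] at h1
  rw [← ENNReal.ofReal_sum_of_nonneg fun i _ => hpos _] at h1
  exact (ENNReal.ofReal_le_ofReal_iff (Finset.sum_nonneg fun i _ => hpos _)).1 h1

/-- With areas `1` for `p` and `q` and small areas elsewhere, the bounding rectangle would have area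
at most `3`, but two rectangles of area `1` separated in both directions need area `4`. -/
theorem not_areaUniversal_of_sep (T : Tiling I) {p q : I}
    (hs : ∀ T' : Tiling I, WeakEquiv T T' → DiagSep T' p q) : ¬ AreaUniversal T := by
  classical
  intro hA
  have hn : (0 : ℝ) < Fintype.card I := Nat.cast_pos.2 (Fintype.card_pos_iff.2 ⟨p⟩)
  obtain ⟨T', hT', hw⟩ := hA (fun i => if i = p ∨ i = q then 1 else (Fintype.card I : ℝ)⁻¹)
    (fun i => by
      split_ifs
      · exact one_pos
      · exact inv_pos.2 hn)
  have h := tiling_til T'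
  have hsum : T'.F.area ≤ 3 := by
    calc T'.F.area ≤ ∑ i, (T'.R i).area := area_le_sum T'
      _ ≤ ∑ i, ((if i = p then 1 else 0) + (if i = q then 1 else 0) +
          (Fintype.card I : ℝ)⁻¹) := by
        refine Finset.sum_le_sum fun i _ => ?_
        have := (inv_pos.2 hn).le
        rw [hw i]
        by_cases h1 : i = p <;> by_cases h2 : i = q <;> simp only [h1, h2, or_true, true_or,
          or_self, if_true, if_false] <;> first | linarith | (split_ifs <;> linarith)
      _ = 3 := by
        rw [Finset.sum_add_distrib, Finset.sum_add_distrib, Finset.sum_ite_eq' , Finset.sum_ite_eq',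
          Finset.sum_const, Finset.card_univ, nsmul_eq_mul, mul_inv_cancel₀ hn.ne']
        norm_num
  have hp : ((T'.R p).x2 - (T'.R p).x1) * ((T'.R p).y2 - (T'.R p).y1) = 1 := by
    have := hw p
    rwa [if_pos (Or.inl rfl)] at this
  have hq : ((T'.R q).x2 - (T'.R q).x1) * ((T'.R q).y2 - (T'.R q).y1) = 1 := by
    have := hw q
    rwa [if_pos (Or.inr rfl)] at this
  obtain ⟨s1, s2⟩ := hs T' hT'
  have px := sub_pos.2 (T'.R p).hx
  have py := sub_pos.2 (T'.R p).hy
  have qx := sub_pos.2 (T'.R q).hx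
  have qy := sub_pos.2 (T'.R q).hy
  have b1 := h.bl p
  have b2 := h.bl q
  have b3 := h.br p
  have b4 := h.br q
  have b5 := h.bb p
  have b6 := h.bb q
  have b7 := h.bt p
  have b8 := h.bt q
  have hW : ((T'.R p).x2 - (T'.R p).x1) + ((T'.R q).x2 - (T'.R q).x1) ≤ T'.F.x2 - T'.F.x1 := by
    rcases s1 with s1 | s1 <;> linarith
  have hH : ((T'.R p).y2 - (T'.R p).y1) + ((T'.R q).y2 - (T'.R q).y1) ≤ T'.F.y2 - T'.F.y1 := by
    rcases s2 with s2 | s2 <;> linarith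
  have hF : _ ≤ T'.F.area := mul_le_mul hW hH (add_pos py qy).le (sub_pos.2 T'.F.hx).le
  generalize (T'.R p).x2 - (T'.R p).x1 = a at *
  generalize (T'.R p).y2 - (T'.R p).y1 = b at *
  generalize (T'.R q).x2 - (T'.R q).x1 = c at *
  generalize (T'.R q).y2 - (T'.R q).y1 = d at *
  -- the mixed products `a * d` and `c * b` have product `1`, so their sum is at least `2`
  have h1 : (a * d) * (c * b) = 1 := by
    calc (a * d) * (c * b) = (a * b) * (c * d) := by ring
      _ = 1 := by rw [hp, hq, one_mul]
  have h2 : 0 < a * d := mul_pos px qy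
  have h3 : 0 < c * b := mul_pos qx py
  nlinarith [sq_nonneg (a * d - c * b)]

theorem sides_of_areaUniversal (T : Tiling I) (hgen : Generic T) (hA : AreaUniversal T)
    {S : Set (ℝ × ℝ)} (hS : IsMaxInternalSeg T S) : ∃ i : I, (T.R i).IsSide S := by
  have h := tiling_til T
  have g := tiling_gen hgen
  have hv : ∀ T' : Tiling I, WeakEquiv T T' → ∀ i j,
      LAdj (fun i => (T.R i).x1) (fun i => (T.R i).x2) (fun i => (T.R i).y1)
        (fun i => (T.R i).y2) i j →
      LAdj (fun i => (T'.R i).x1) (fun i => (T'.R i).x2) (fun i => (T'.R i).y1)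
        (fun i => (T'.R i).y2) i j := fun T' e i j hij =>
    leftAdj_iff.1 ((e.1 i j).1 (leftAdj_iff.2 hij))
  have hh : ∀ T' : Tiling I, WeakEquiv T T' → ∀ i j,
      LAdj (fun i => (T.R i).y1) (fun i => (T.R i).y2) (fun i => (T.R i).x1)
        (fun i => (T.R i).x2) i j →
      LAdj (fun i => (T'.R i).y1) (fun i => (T'.R i).y2) (fun i => (T'.R i).x1)
        (fun i => (T'.R i).x2) i j := fun T' e i j hij =>
    belowAdj_iff.1 ((e.2.1 i j).1 (belowAdj_iff.2 hij))
  rcases (isInternalSeg_iff T).1 hS.1 with ⟨x, c, d, rfl, hi⟩ | ⟨y, a, b, rfl, hi⟩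
  · have hm := (isMaxInternalSeg_vseg_iff T hi.2.2.1).1 hS
    rcases side_or_badV h g hm with ⟨k, hk⟩ | ⟨p, q, hb | hb⟩
    · exact ⟨k, (isSide_vseg_iff hi.2.2.1).2 hk⟩
    · refine absurd hA (not_areaUniversal_of_sep (p := p) (q := q) T fun T' e => ?_)
      have := hb.transfer (hv T' e) (hh T' e)
      exact ⟨Or.inl this.1, Or.inl this.2⟩
    · refine absurd hA (not_areaUniversal_of_sep (p := p) (q := q) T fun T' e => ?_)
      have := BadV.transfer_neg (hv T' e) (hh T' e) hb
      exact ⟨Or.inr this.1, Or.inl this.2⟩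
  · have hm := (isMaxInternalSeg_hseg_iff T hi.2.2.1).1 hS
    rcases side_or_badV h.swap g.swap hm with ⟨k, hk⟩ | ⟨p, q, hb | hb⟩
    · exact ⟨k, (isSide_hseg_iff hi.2.2.1).2 hk⟩
    · refine absurd hA (not_areaUniversal_of_sep (p := p) (q := q) T fun T' e => ?_)
      have := hb.transfer (hh T' e) (hv T' e)
      exact ⟨Or.inl this.2, Or.inl this.1⟩
    · refine absurd hA (not_areaUniversal_of_sep (p := p) (q := q) T fun T' e => ?_)
      have := BadV.transfer_neg (hh T' e) (hv T' e) hb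
      exact ⟨Or.inl this.2, Or.inr this.1⟩

end Main

/-- A generic rectangular tiling is area-universal if and only if every
maximal internal line segment of the tiling is a side of at least one of its rectangles. -/
theorem generic_areaUniversal_iff_every_maxSeg_is_side
    {I : Type*} [Fintype I] (T : Tiling I) (hgen : Generic T) :
    AreaUniversal T ↔
      ∀ S : Set (ℝ × ℝ), IsMaxInternalSeg T S → ∃ i : I, (T.R i).IsSide S := by
  exact ⟨fun hA _ hS => sides_of_areaUniversal T hgen hA hS, areaUniversal_of_sides T hgen⟩
end

section
/- Let R_1, …, R_n (n ≥ 1) be a side-attachment sequence of axis-parallel rectangles. Then every maximal internal line segment of the rectangular tiling (R_1,…,R_n) of U_n = R_1 ∪ ⋯ ∪ R_n is equal to a side of at least one of the rectangles R_j. -/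
/-!
Let `U_j` be the bounding rectangle of `R_0 ∪ ⋯ ∪ R_j`. Looking at which of the two rectangles
`U_j`, `R_{j+1}` contains each of the four corners of `U_{j+1}` shows that `R_{j+1}` is attached
along a full side of `U_j` (`Rect.attach_cases`). The common side is a side of `R_{j+1}`, and it
runs across the whole of `U_{j+1}`.

By induction on `j`, every open segment that lies in the interior of `U_j` and in the boundaries of
`R_0, …, R_j` is contained in a side of one of these rectangles, and this side is itself internal
to `U_j` (`AttachSeq.exists_side`). Indeed, such a segment of `U_{j+1}` avoids the interior of
`R_{j+1}`; hence it either lies on the newly created common side or stays in the interior of `U_j`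
(`Rect.attach_segment`), where the induction hypothesis applies. A maximal internal segment must
therefore coincide with the side that contains it.

The argument is carried out for vertical segments with coordinate inequalities; the horizontal case
follows by exchanging the two coordinates (`Rect.swap`).
-/

open Set

variable {I : Type*} [Fintype I]

/-! ### Rectangles in coordinates, and attaching along a side -/

namespace Rect

/-- The point `(p, q)` lies in the closed rectangle `R`. -/
def Mem (R : Rect) (p q : ℝ) : Prop := R.x1 ≤ p ∧ p ≤ R.x2 ∧ R.y1 ≤ q ∧ q ≤ R.y2

/-- The point `(p, q)` lies in the open rectangle `R`. -/
def SMem (R : Rect) (p q : ℝ) : Prop := R.x1 < p ∧ p < R.x2 ∧ R.y1 < q ∧ q < R.y2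

/-- The reflection of `R` in the diagonal. -/
def swap (R : Rect) : Rect := ⟨R.y1, R.y2, R.x1, R.x2, R.hy, R.hx⟩

lemma mem_toSet_s1 (R : Rect) (p q : ℝ) : (p, q) ∈ R.toSet ↔ R.Mem p q := by
  simp only [toSet, Mem, Set.mem_prod, Set.mem_Icc, and_assoc]

lemma mem_interior_s1 (R : Rect) (p q : ℝ) : (p, q) ∈ interior R.toSet ↔ R.SMem p q := by
  simp only [toSet, SMem, interior_prod_eq, interior_Icc, Set.mem_prod, Set.mem_Ioo, and_assoc]

lemma mem_frontier (R : Rect) (p q : ℝ) :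
    (p, q) ∈ frontier R.toSet ↔ R.Mem p q ∧ ¬ R.SMem p q := by
  have hc : IsClosed R.toSet := isClosed_Icc.prod isClosed_Icc
  rw [hc.frontier_eq, Set.mem_sdiff, mem_toSet_s1, mem_interior_s1]

lemma swap_mem (R : Rect) (p q : ℝ) : R.swap.Mem p q ↔ R.Mem q p := by
  simp only [swap, Mem]; tauto

lemma swap_smem (R : Rect) (p q : ℝ) : R.swap.SMem p q ↔ R.SMem q p := by
  simp only [swap, SMem]; tauto

lemma bounds_of_subset {A B : Rect} (h : ∀ p q, A.Mem p q → B.Mem p q) :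
    B.x1 ≤ A.x1 ∧ A.x2 ≤ B.x2 ∧ B.y1 ≤ A.y1 ∧ A.y2 ≤ B.y2 := by
  have h1 := h A.x1 A.y1 ⟨le_rfl, A.hx.le, le_rfl, A.hy.le⟩
  have h2 := h A.x2 A.y2 ⟨A.hx.le, le_rfl, A.hy.le, le_rfl⟩
  exact ⟨h1.1, h2.2.1, h1.2.2.1, h2.2.2.2⟩

/-- A closed rectangle is the closure of its interior, so two rectangles with disjoint interiors
satisfy the stronger property that the interior of one misses the other closed rectangle. -/
lemma smem_disjoint_mem {A B : Rect} (h : ∀ p q, A.SMem p q → ¬ B.SMem p q) (p q : ℝ)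
    (hA : A.SMem p q) : ¬ B.Mem p q := by
  rintro ⟨b1, b2, b3, b4⟩
  obtain ⟨a1, a2, a3, a4⟩ := hA
  have hx : max A.x1 B.x1 < min A.x2 B.x2 :=
    max_lt (lt_min A.hx (a1.trans_le b2)) (lt_min (b1.trans_lt a2) B.hx)
  have hy : max A.y1 B.y1 < min A.y2 B.y2 :=
    max_lt (lt_min A.hy (a3.trans_le b4)) (lt_min (b3.trans_lt a4) B.hy)
  obtain ⟨s, s1, s2⟩ := exists_between hx
  obtain ⟨t, t1, t2⟩ := exists_between hy
  simp only [max_lt_iff, lt_min_iff] at s1 s2 t1 t2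
  exact h s t ⟨s1.1, s2.1, t1.1, t2.1⟩ ⟨s1.2, s2.2, t1.2, t2.2⟩

/-- If two interior-disjoint rectangles `U` and `R` have a rectangular union `V`, then `R` is
attached along the full right, left, top or bottom side of `U`. -/
lemma attach_cases {U R V : Rect} (hV : ∀ p q, V.Mem p q ↔ U.Mem p q ∨ R.Mem p q)
    (hd : ∀ p q, R.SMem p q → ¬ U.Mem p q) :
    (U.y1 = V.y1 ∧ U.y2 = V.y2 ∧ R.y1 = V.y1 ∧ R.y2 = V.y2 ∧
      ((U.x1 = V.x1 ∧ R.x2 = V.x2 ∧ R.x1 = U.x2) ∨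
       (R.x1 = V.x1 ∧ U.x2 = V.x2 ∧ R.x2 = U.x1))) ∨
    (U.x1 = V.x1 ∧ U.x2 = V.x2 ∧ R.x1 = V.x1 ∧ R.x2 = V.x2 ∧
      ((U.y1 = V.y1 ∧ R.y2 = V.y2 ∧ R.y1 = U.y2) ∨
       (R.y1 = V.y1 ∧ U.y2 = V.y2 ∧ R.y2 = U.y1))) := by
  obtain ⟨u1, u2, u3, u4⟩ := bounds_of_subset (A := U) (B := V) fun p q h => (hV p q).2 (.inl h)
  obtain ⟨r1, r2, r3, r4⟩ := bounds_of_subset (A := R) (B := V) fun p q h => (hV p q).2 (.inr h)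
  have hd' : ∀ p q, U.SMem p q → ¬ R.Mem p q :=
    smem_disjoint_mem fun p q hU hR => hd p q hR ⟨hU.1.le, hU.2.1.le, hU.2.2.1.le, hU.2.2.2.le⟩
  have Ux := U.hx
  have Uy := U.hy
  have Rx := R.hx
  have Ry := R.hy
  have Vx := V.hx
  have Vy := V.hy
  have cU := hd' ((U.x1 + U.x2) / 2) ((U.y1 + U.y2) / 2)
    ⟨by linarith, by linarith, by linarith, by linarith⟩
  have cR := hd ((R.x1 + R.x2) / 2) ((R.y1 + R.y2) / 2)
    ⟨by linarith, by linarith, by linarith, by linarith⟩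
  have k1 := (hV V.x1 V.y1).1 ⟨le_rfl, Vx.le, le_rfl, Vy.le⟩
  have k2 := (hV V.x1 V.y2).1 ⟨le_rfl, Vx.le, Vy.le, le_rfl⟩
  have k3 := (hV V.x2 V.y1).1 ⟨Vx.le, le_rfl, le_rfl, Vy.le⟩
  have k4 := (hV V.x2 V.y2).1 ⟨Vx.le, le_rfl, Vy.le, le_rfl⟩
  -- A rectangle containing two opposite corners of `V` would be all of `V`
  -- and so contain the center of the other one.
  have nU : ¬ (U.x1 ≤ V.x1 ∧ V.x2 ≤ U.x2 ∧ U.y1 ≤ V.y1 ∧ V.y2 ≤ U.y2) := by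
    rintro ⟨a, b, c, d⟩
    exact cR ⟨by linarith, by linarith, by linarith, by linarith⟩
  have nR : ¬ (R.x1 ≤ V.x1 ∧ V.x2 ≤ R.x2 ∧ R.y1 ≤ V.y1 ∧ V.y2 ≤ R.y2) := by
    rintro ⟨a, b, c, d⟩
    exact cU ⟨by linarith, by linarith, by linarith, by linarith⟩
  -- A vertical or horizontal strip separating `U` from `R` would be uncovered.
  have g1 : R.x1 ≤ U.x2 := by
    by_contra! hlt
    obtain ⟨s, s1, s2⟩ := exists_between hlt
    rcases (hV s V.y1).1 ⟨by linarith, by linarith, le_rfl, Vy.le⟩ with k | k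
    · exact absurd k.2.1 s1.not_ge
    · exact absurd k.1 s2.not_ge
  have g2 : U.x1 ≤ R.x2 := by
    by_contra! hlt
    obtain ⟨s, s1, s2⟩ := exists_between hlt
    rcases (hV s V.y1).1 ⟨by linarith, by linarith, le_rfl, Vy.le⟩ with k | k
    · exact absurd k.1 s2.not_ge
    · exact absurd k.2.1 s1.not_ge
  have g3 : R.y1 ≤ U.y2 := by
    by_contra! hlt
    obtain ⟨s, s1, s2⟩ := exists_between hlt
    rcases (hV V.x1 s).1 ⟨le_rfl, Vx.le, by linarith, by linarith⟩ with k | k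
    · exact absurd k.2.2.2 s1.not_ge
    · exact absurd k.2.2.1 s2.not_ge
  have g4 : U.y1 ≤ R.y2 := by
    by_contra! hlt
    obtain ⟨s, s1, s2⟩ := exists_between hlt
    rcases (hV V.x1 s).1 ⟨le_rfl, Vx.le, by linarith, by linarith⟩ with k | k
    · exact absurd k.2.2.1 s2.not_ge
    · exact absurd k.2.2.2 s1.not_ge
  have noverlap : ¬ (max R.x1 U.x1 < min R.x2 U.x2 ∧ max R.y1 U.y1 < min R.y2 U.y2) := by
    rintro ⟨hx, hy⟩
    obtain ⟨s, s1, s2⟩ := exists_between hx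
    obtain ⟨t, t1, t2⟩ := exists_between hy
    simp only [max_lt_iff, lt_min_iff] at s1 s2 t1 t2
    exact hd s t ⟨s1.1, s2.1, t1.1, t2.1⟩ ⟨s1.2.le, s2.2.le, t1.2.le, t2.2.le⟩
  simp only [max_lt_iff, lt_min_iff] at noverlap
  simp only [Mem] at *
  clear hV hd hd' cU cR
  rcases k1 with k1 | k1 <;> rcases k2 with k2 | k2 <;> rcases k3 with k3 | k3 <;>
    rcases k4 with k4 | k4 <;> grind

/-- An open vertical segment in the interior of `V = U ∪ R` that avoids the interior of `R` lies
either on the common side of `U` and `R`, or in the interior of `U`. -/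
lemma attach_segment {U R V : Rect} (hV : ∀ p q, V.Mem p q ↔ U.Mem p q ∨ R.Mem p q)
    (hd : ∀ p q, R.SMem p q → ¬ U.Mem p q) {x c d : ℝ} (hcd : c < d)
    (hs : ∀ y, c < y → y < d → V.SMem x y ∧ ¬ R.SMem x y) :
    ((x = R.x1 ∨ x = R.x2) ∧ R.y1 ≤ c ∧ d ≤ R.y2 ∧ V.x1 < x ∧ x < V.x2) ∨
    ∀ y, c < y → y < d → U.SMem x y := by
  obtain ⟨m, m1, m2⟩ := exists_between hcd
  have hm := hs m m1 m2
  have hc : V.y1 ≤ c := by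
    by_contra! hlt
    obtain ⟨t, t1, t2⟩ := exists_between (lt_min hlt hcd)
    have := (hs t t1 (t2.trans_le (min_le_right _ _))).1.2.2.1
    exact absurd (t2.trans_le (min_le_left _ _)) this.not_gt
  have hd2 : d ≤ V.y2 := by
    by_contra! hlt
    obtain ⟨t, t1, t2⟩ := exists_between (max_lt hlt hcd)
    have := (hs t ((le_max_right _ _).trans_lt t1) t2).1.2.2.2
    exact absurd ((le_max_left _ _).trans_lt t1) this.not_gt
  rcases attach_cases hV hd with ⟨a1, a2, a3, a4, hcase⟩ | ⟨a1, a2, a3, a4, hcase⟩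
  · by_cases hx : x = R.x1 ∨ x = R.x2
    · exact .inl ⟨hx, a3 ▸ hc, a4 ▸ hd2, hm.1.1, hm.1.2.1⟩
    · right
      intro y y1 y2
      have h1 := hs y y1 y2
      simp only [SMem] at h1 ⊢
      grind
  · right
    rcases hcase with ⟨b1, b2, b3⟩ | ⟨b1, b2, b3⟩
    · have : d ≤ U.y2 := by
        by_contra! hlt
        obtain ⟨t, t1, t2⟩ := exists_between (max_lt hlt hcd)
        rw [max_lt_iff] at t1
        have h1 := hs t t1.2 t2
        simp only [SMem] at h1
        grind
      intro y y1 y2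
      have h1 := hs y y1 y2
      simp only [SMem] at h1 ⊢
      grind
    · have : U.y1 ≤ c := by
        by_contra! hlt
        obtain ⟨t, t1, t2⟩ := exists_between (lt_min hlt hcd)
        rw [lt_min_iff] at t2
        have h1 := hs t t1 t2.2
        simp only [SMem] at h1
        grind
      intro y y1 y2
      have h1 := hs y y1 y2
      simp only [SMem] at h1 ⊢
      grind

end Rect

/-! ### Internal segments of a side-attachment sequence -/

/-- Coordinate form of a side-attachment sequence: the open rectangles `R i` are pairwise disjoint
and `U j` is the union of the `R i` with `i ≤ j`. -/
structure AttachSeq {n : ℕ} (R U : Fin n → Rect) : Prop where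
  disj : ∀ i j, i ≠ j → ∀ p q, (R i).SMem p q → ¬ (R j).SMem p q
  cover : ∀ j p q, (U j).Mem p q ↔ ∃ i ≤ j, (R i).Mem p q

namespace AttachSeq

lemma swap {n : ℕ} {R U : Fin n → Rect} (h : AttachSeq R U) :
    AttachSeq (fun i => (R i).swap) (fun i => (U i).swap) where
  disj i j hij p q := by
    simpa only [Rect.swap_smem] using h.disj i j hij q p
  cover j p q := by
    simpa only [Rect.swap_mem] using h.cover j q p

/-- Every open vertical segment in the interior of `U m` that is covered by the boundaries of
`R 0, …, R m` is contained in a vertical side of some `R k` which is internal to `U m`. -/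
lemma exists_side {n : ℕ} {R U : Fin n → Rect} (h : AttachSeq R U) (m : ℕ) (hm : m < n)
    {x c d : ℝ} (hcd : c < d)
    (hs : ∀ y, c < y → y < d → (U ⟨m, hm⟩).SMem x y ∧
      ∃ i ≤ (⟨m, hm⟩ : Fin n), (R i).Mem x y ∧ ¬ (R i).SMem x y) :
    ∃ k, (x = (R k).x1 ∨ x = (R k).x2) ∧ (R k).y1 ≤ c ∧ d ≤ (R k).y2 ∧
      (U ⟨m, hm⟩).x1 < x ∧ x < (U ⟨m, hm⟩).x2 ∧
      (U ⟨m, hm⟩).y1 ≤ (R k).y1 ∧ (R k).y2 ≤ (U ⟨m, hm⟩).y2 := by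
  induction m with
  | zero =>
    -- A single rectangle has no boundary points in its interior.
    exfalso
    obtain ⟨y, y1, y2⟩ := exists_between hcd
    obtain ⟨hU, i, hi, -, hn⟩ := hs y y1 y2
    have key : ∀ i ≤ (⟨0, hm⟩ : Fin n), i = ⟨0, hm⟩ := fun i hi =>
      Fin.ext (Nat.le_zero.1 hi)
    have hb := Rect.bounds_of_subset (A := U ⟨0, hm⟩) (B := R i) fun p q hp => by
      obtain ⟨i', hi', h'⟩ := (h.cover _ p q).1 hp
      rwa [key i' hi', ← key i hi] at h'
    obtain ⟨a1, a2, a3, a4⟩ := hU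
    exact hn ⟨by linarith, by linarith, by linarith, by linarith⟩
  | succ m ih =>
    have hm' : m < n := by omega
    have hle : ∀ i : Fin n, i ≤ ⟨m + 1, hm⟩ ↔ i ≤ ⟨m, hm'⟩ ∨ i = ⟨m + 1, hm⟩ := by
      intro i
      simp only [Fin.le_def, Fin.ext_iff]
      omega
    have hV : ∀ p q, (U ⟨m + 1, hm⟩).Mem p q ↔
        (U ⟨m, hm'⟩).Mem p q ∨ (R ⟨m + 1, hm⟩).Mem p q := by
      intro p q
      rw [h.cover, h.cover]
      constructor
      · rintro ⟨i, hi, hp⟩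
        rcases (hle i).1 hi with hi | rfl
        · exact .inl ⟨i, hi, hp⟩
        · exact .inr hp
      · rintro (⟨i, hi, hp⟩ | hp)
        · exact ⟨i, (hle i).2 (.inl hi), hp⟩
        · exact ⟨_, le_rfl, hp⟩
    have hd : ∀ p q, (R ⟨m + 1, hm⟩).SMem p q → ¬ (U ⟨m, hm'⟩).Mem p q := by
      intro p q hR hU
      obtain ⟨i, hi, hp⟩ := (h.cover _ p q).1 hU
      refine Rect.smem_disjoint_mem (h.disj ⟨m + 1, hm⟩ i ?_) p q hR hp
      rintro rfl
      simp [Fin.le_def] at hi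
    have hd' : ∀ p q, (U ⟨m, hm'⟩).SMem p q → ¬ (R ⟨m + 1, hm⟩).Mem p q :=
      Rect.smem_disjoint_mem fun p q hU hR =>
        hd p q hR ⟨hU.1.le, hU.2.1.le, hU.2.2.1.le, hU.2.2.2.le⟩
    have bU := Rect.bounds_of_subset (A := U ⟨m, hm'⟩) (B := U ⟨m + 1, hm⟩)
      fun p q hp => (hV p q).2 (.inl hp)
    have bR := Rect.bounds_of_subset (A := R ⟨m + 1, hm⟩) (B := U ⟨m + 1, hm⟩)
      fun p q hp => (hV p q).2 (.inr hp)
    have hs' : ∀ y, c < y → y < d →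
        (U ⟨m + 1, hm⟩).SMem x y ∧ ¬ (R ⟨m + 1, hm⟩).SMem x y := by
      intro y y1 y2
      obtain ⟨hU, i, hi, hmem, hns⟩ := hs y y1 y2
      refine ⟨hU, fun hR => ?_⟩
      rcases (hle i).1 hi with hi | rfl
      · exact hd x y hR ((h.cover _ x y).2 ⟨i, hi, hmem⟩)
      · exact hns hR
    rcases Rect.attach_segment hV hd hcd hs' with ⟨h1, h2, h3, h4, h5⟩ | hin
    · exact ⟨_, h1, h2, h3, h4, h5, bR.2.2.1, bR.2.2.2⟩
    · obtain ⟨k, k1, k2, k3, k4, k5, k6, k7⟩ := ih hm' fun y y1 y2 => by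
        obtain ⟨-, i, hi, hmem, hns⟩ := hs y y1 y2
        refine ⟨hin y y1 y2, i, ?_, hmem, hns⟩
        rcases (hle i).1 hi with hi | rfl
        · exact hi
        · exact absurd hmem (hd' x y (hin y y1 y2))
      exact ⟨k, k1, k2, k3, by linarith, by linarith, by linarith, by linarith⟩

end AttachSeq

/-- In the rectangular tiling arising from a side-attachment sequence,
every maximal internal line segment is a side of at least one of the rectangles. -/
theorem sideAttachSeq_maxSeg_is_side
    {n : ℕ} (hn : 1 ≤ n) (T : Tiling (Fin n)) (h : SideAttachSeq T.R)
    (S : Set (ℝ × ℝ)) (hS : IsMaxInternalSeg T S) :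
    ∃ j : Fin n, (T.R j).IsSide S := by
  obtain ⟨hdisj, hU⟩ := h
  choose U hU using hU
  have hA : AttachSeq T.R U :=
    { disj := fun i j hij p q hi hj => by
        have : (p, q) ∈ interior (T.R i).toSet ∩ interior (T.R j).toSet :=
          ⟨((T.R i).mem_interior_s1 p q).2 hi, ((T.R j).mem_interior_s1 p q).2 hj⟩
        rw [hdisj hij] at this
        exact this
      cover := fun j p q => by
        rw [← Rect.mem_toSet_s1, ← hU j]
        simp [Rect.mem_toSet_s1] }
  have hlt : n - 1 < n := by omega
  have hlast : ∀ i : Fin n, i ≤ ⟨n - 1, hlt⟩ := fun i => by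
    simp only [Fin.le_def]; omega
  have hF : T.F.toSet = (U ⟨n - 1, hlt⟩).toSet := by
    rw [← T.union, ← hU]
    ext p
    simp [hlast]
  obtain ⟨hint, hmax⟩ := hS
  rcases hint with ⟨x, c, d, hcd, rfl, hfr, hop⟩ | ⟨c, d, x, hcd, rfl, hfr, hop⟩
  · obtain ⟨k, k1, k2, k3, k4, k5, k6, k7⟩ := hA.exists_side (n - 1) hlt (x := x) hcd
      fun y y1 y2 => by
        refine ⟨?_, ?_⟩
        · rw [← Rect.mem_interior_s1, ← hF]
          exact hop ⟨rfl, y1, y2⟩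
        · obtain ⟨i, hi⟩ := Set.mem_iUnion.1 (hfr (show (x, y) ∈ vseg x c d from
            ⟨rfl, y1.le, y2.le⟩))
          exact ⟨i, hlast i, ((T.R i).mem_frontier x y).1 hi⟩
    have hS' : vseg x (T.R k).y1 (T.R k).y2 = vseg x c d := by
      refine hmax _ (.inl ⟨x, _, _, (T.R k).hy, rfl, ?_, ?_⟩) ?_
      · rintro ⟨p, q⟩ ⟨hp, hq⟩
        obtain rfl : p = x := hp
        refine Set.mem_iUnion.2 ⟨k, ((T.R k).mem_frontier p q).2 ?_⟩
        have := (T.R k).hx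
        have hq1 : (T.R k).y1 ≤ q := hq.1
        have hq2 : q ≤ (T.R k).y2 := hq.2
        simp only [Rect.Mem, Rect.SMem]
        grind
      · rintro ⟨p, q⟩ ⟨hp, hq⟩
        obtain rfl : p = x := hp
        rw [hF, Rect.mem_interior_s1]
        exact ⟨k4, k5, k6.trans_lt hq.1, hq.2.trans_le k7⟩
      · exact Set.prod_mono le_rfl (Set.Icc_subset_Icc k2 k3)
    refine ⟨k, ?_⟩
    rw [← hS']
    rcases k1 with rfl | rfl
    · exact .inl rfl
    · exact .inr (.inl rfl)
  · obtain ⟨k, k1, k2, k3, k4, k5, k6, k7⟩ := hA.swap.exists_side (n - 1) hlt (x := x) hcd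
      fun y y1 y2 => by
        refine ⟨?_, ?_⟩
        · rw [Rect.swap_smem, ← Rect.mem_interior_s1, ← hF]
          exact hop ⟨⟨y1, y2⟩, rfl⟩
        · obtain ⟨i, hi⟩ := Set.mem_iUnion.1 (hfr (show (y, x) ∈ hseg c d x from
            ⟨⟨y1.le, y2.le⟩, rfl⟩))
          refine ⟨i, hlast i, ?_⟩
          rw [Rect.swap_smem, Rect.swap_mem]
          exact ((T.R i).mem_frontier y x).1 hi
    simp only [Rect.swap] at k1 k2 k3 k4 k5 k6 k7
    have hS' : hseg (T.R k).x1 (T.R k).x2 x = hseg c d x := by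
      refine hmax _ (.inr ⟨_, _, x, (T.R k).hx, rfl, ?_, ?_⟩) ?_
      · rintro ⟨q, p⟩ ⟨hq, hp⟩
        obtain rfl : p = x := hp
        refine Set.mem_iUnion.2 ⟨k, ((T.R k).mem_frontier q p).2 ?_⟩
        have := (T.R k).hy
        have hq1 : (T.R k).x1 ≤ q := hq.1
        have hq2 : q ≤ (T.R k).x2 := hq.2
        simp only [Rect.Mem, Rect.SMem]
        grind
      · rintro ⟨q, p⟩ ⟨hq, hp⟩
        obtain rfl : p = x := hp
        rw [hF, Rect.mem_interior_s1]
        exact ⟨k6.trans_lt hq.1, hq.2.trans_le k7, k4, k5⟩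
      · exact Set.prod_mono (Set.Icc_subset_Icc k2 k3) le_rfl
    refine ⟨k, ?_⟩
    rw [← hS']
    rcases k1 with rfl | rfl
    · exact .inr (.inr (.inl rfl))
    · exact .inr (.inr (.inr rfl))
end

section
/- Let R_1, …, R_n be a side-attachment sequence of axis-parallel rectangles and let 2 ≤ j ≤ n. Then the intersection R_j ∩ U_{j-1} (where U_{j-1} = R_1 ∪ ⋯ ∪ R_{j-1}) is simultaneously equal to one of the four sides of the rectangle R_j and to one of the four sides of the rectangle U_{j-1}. -/
/-!
Write `A = R_j`. Since every `R_i` is the closure of its interior, the interior of `A` misses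
each earlier `R_i`, hence misses `U` (`Rect.interior_inter_eq_empty`). Two rectangles of which
one misses the interior of the other are separated by a vertical or horizontal line
(`Rect.separated`). As `A ∪ U` is again a rectangle `W`, say with `A` to the left of `U`, the left
corners of `W` lie in `A` and its right corners in `U`, so both rectangles span the full height
of `W`; they touch because `W` has no gap between them (`glue_of_separated`). The intersection
is then exactly the common side.
-/

open Set

variable {I : Type*} [Fintype I]

/-- If two nonempty boxes, the first to the left of the second, have a box as their union, then
they abut along a full side. Stated in coordinates so that it also applies with the two axes
exchanged. -/
lemma glue_of_separated {a b c d a' b' c' d' p q r s : ℝ}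
    (hab : a < b) (hcd : c < d) (hab' : a' < b') (hcd' : c' < d') (hsep : b ≤ a')
    (H : ∀ x y, ((a ≤ x ∧ x ≤ b) ∧ (c ≤ y ∧ y ≤ d) ∨
      (a' ≤ x ∧ x ≤ b') ∧ (c' ≤ y ∧ y ≤ d')) ↔ (p ≤ x ∧ x ≤ q) ∧ (r ≤ y ∧ y ≤ s)) :
    b = a' ∧ c = c' ∧ d = d' := by
  have h1 := (H a c).1 (by grind)
  have h2 := (H a d).1 (by grind)
  have h3 := (H b' c').1 (by grind)
  have h4 := (H b' d').1 (by grind)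
  have k1 := (H a r).2 (by grind)
  have k2 := (H a s).2 (by grind)
  have k3 := (H b' r).2 (by grind)
  have k4 := (H b' s).2 (by grind)
  -- the midpoint of a hypothetical gap `(b, a')` would lie in the union
  have k5 := (H ((b + a') / 2) c).2 (by grind)
  grind

namespace Rect

lemma mem_toSet_s3 (A : Rect) (x y : ℝ) :
    (x, y) ∈ A.toSet ↔ (A.x1 ≤ x ∧ x ≤ A.x2) ∧ (A.y1 ≤ y ∧ y ≤ A.y2) := Iff.rfl

lemma interior_toSet (A : Rect) :
    interior A.toSet = Set.Ioo A.x1 A.x2 ×ˢ Set.Ioo A.y1 A.y2 := by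
  rw [toSet, interior_prod_eq, interior_Icc, interior_Icc]

lemma closure_interior_toSet (A : Rect) : closure (interior A.toSet) = A.toSet := by
  rw [interior_toSet, closure_prod_eq, closure_Ioo A.hx.ne, closure_Ioo A.hy.ne, toSet]

lemma interior_inter_eq_empty {A B : Rect} (h : interior A.toSet ∩ interior B.toSet = ∅) :
    interior A.toSet ∩ B.toSet = ∅ := by
  rw [← Set.disjoint_iff_inter_eq_empty] at h ⊢
  have := h.closure_right isOpen_interior
  rwa [closure_interior_toSet] at this

lemma separated {A B : Rect} (h : interior A.toSet ∩ B.toSet = ∅) :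
    A.x2 ≤ B.x1 ∨ B.x2 ≤ A.x1 ∨ A.y2 ≤ B.y1 ∨ B.y2 ≤ A.y1 := by
  by_contra! hc
  obtain ⟨h1, h2, h3, h4⟩ := hc
  obtain ⟨x, hx, hx'⟩ := exists_between
    (max_lt (lt_min A.hx h2) (lt_min h1 B.hx))
  obtain ⟨y, hy, hy'⟩ := exists_between
    (max_lt (lt_min A.hy h4) (lt_min h3 B.hy))
  simp only [max_lt_iff, lt_min_iff] at hx hx' hy hy'
  have : (x, y) ∈ interior A.toSet ∩ B.toSet := by
    rw [interior_toSet]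
    exact ⟨⟨⟨hx.1, hx'.1⟩, hy.1, hy'.1⟩, ⟨hx.2.le, hx'.2.le⟩, hy.2.le, hy'.2.le⟩
  simp [h] at this

lemma inter_isSide_of_union {A U W : Rect} (hd : interior A.toSet ∩ U.toSet = ∅)
    (hW : A.toSet ∪ U.toSet = W.toSet) :
    A.IsSide (A.toSet ∩ U.toSet) ∧ U.IsSide (A.toSet ∩ U.toSet) := by
  have H : ∀ x y, _ ↔ _ := fun x y => Set.ext_iff.1 hW (x, y)
  simp only [Set.mem_union, mem_toSet_s3] at H
  have hA := A.hx
  have hA' := A.hy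
  have hB := U.hx
  have hB' := U.hy
  rcases separated hd with h | h | h | h
  · obtain ⟨e1, e2, e3⟩ := glue_of_separated hA hA' hB hB' h H
    have key : A.toSet ∩ U.toSet = vseg A.x2 A.y1 A.y2 := by
      ext ⟨x, y⟩
      simp only [Set.mem_inter_iff, mem_toSet_s3, vseg, Set.mem_prod, Set.mem_singleton_iff,
        Set.mem_Icc]
      grind
    exact ⟨.inr (.inl key), .inl (by rw [key, e1, e2, e3])⟩
  · obtain ⟨e1, e2, e3⟩ := glue_of_separated hB hB' hA hA' h
      (fun x y => or_comm.trans (H x y))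
    have key : A.toSet ∩ U.toSet = vseg A.x1 A.y1 A.y2 := by
      ext ⟨x, y⟩
      simp only [Set.mem_inter_iff, mem_toSet_s3, vseg, Set.mem_prod, Set.mem_singleton_iff,
        Set.mem_Icc]
      grind
    exact ⟨.inl key, .inr (.inl (by rw [key, e1, e2, e3]))⟩
  · obtain ⟨e1, e2, e3⟩ := glue_of_separated hA' hA hB' hB h
      (p := W.y1) (q := W.y2) (r := W.x1) (s := W.x2) (fun x y => by have := H y x; tauto)
    have key : A.toSet ∩ U.toSet = hseg A.x1 A.x2 A.y2 := by
      ext ⟨x, y⟩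
      simp only [Set.mem_inter_iff, mem_toSet_s3, hseg, Set.mem_prod, Set.mem_singleton_iff,
        Set.mem_Icc]
      grind
    exact ⟨.inr (.inr (.inr key)), .inr (.inr (.inl (by rw [key, e1, e2, e3])))⟩
  · obtain ⟨e1, e2, e3⟩ := glue_of_separated hB' hB hA' hA h
      (p := W.y1) (q := W.y2) (r := W.x1) (s := W.x2) (fun x y => by have := H y x; tauto)
    have key : A.toSet ∩ U.toSet = hseg A.x1 A.x2 A.y1 := by
      ext ⟨x, y⟩
      simp only [Set.mem_inter_iff, mem_toSet_s3, hseg, Set.mem_prod, Set.mem_singleton_iff,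
        Set.mem_Icc]
      grind
    exact ⟨.inr (.inr (.inl key)), .inr (.inr (.inr (by rw [key, e1, e2, e3])))⟩

end Rect

/-- In a side-attachment sequence, for `2 ≤ j` (here `1 ≤ (j : ℕ)` in
0-based indexing), the intersection `R_j ∩ U_{j-1}` is simultaneously a side of the
rectangle `R_j` and a side of the rectangle `U_{j-1} = R_1 ∪ ⋯ ∪ R_{j-1}`. -/
theorem sideAttachSeq_inter_is_common_side
    {n : ℕ} (R : Fin n → Rect) (h : SideAttachSeq R) (j : Fin n) (hj : 1 ≤ (j : ℕ))
    (U : Rect) (hU : (⋃ i ∈ Set.Iio j, (R i).toSet) = U.toSet) :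
    (R j).IsSide ((R j).toSet ∩ U.toSet) ∧ U.IsSide ((R j).toSet ∩ U.toSet) := by
  obtain ⟨W, hW⟩ := h.2 j
  refine Rect.inter_isSide_of_union (W := W) ?_ ?_
  · rw [← hU, Set.inter_iUnion₂]
    simp only [Set.iUnion_eq_empty]
    exact fun i hi => Rect.interior_inter_eq_empty (h.1 (ne_of_gt hi))
  · rw [← hW, ← hU, ← Set.Iio_insert, Set.biUnion_insert]
end

section
/- Let R_1, …, R_n be a side-attachment sequence of axis-parallel rectangles and let 2 ≤ j < k ≤ n. Set s_j = R_j ∩ U_{j-1} and s_k = R_k ∩ U_{k-1}, where U_m = R_1 ∪ ⋯ ∪ R_m. If s_j and s_k are both vertical segments, then they lie on distinct vertical lines (their x-coordinates differ); if s_j and s_k are both horizontal segments, then they lie on distinct horizontal lines (their y-coordinates differ). In particular, the internal line segment created at a later insertion step never extends, by collinear continuation, a segment created at an earlier step. -/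
/-!
If `R_j ∩ U_{j-1}` is a vertical segment at abscissa `x`, the horizontal projections of the two
rectangles meet only in `x`, so `x` is the right end of one projection and the left end of the other
(`endpoints_of_Icc_inter_Icc_eq_singleton`). Two consequences follow for `j < k`. Since `R_j` and
`U_{j-1}` both lie in `U_{k-1}` and extend to different sides of `x`, the abscissa of `s_j` is
strictly inside the horizontal projection of `U_{k-1}`. On the other hand the abscissa of `s_k`
is an endpoint of that same projection, so the two differ. The horizontal case is
the same argument for the vertical projections.
-/

open Set

variable {I : Type*} [Fintype I]

/-- Two nondegenerate intervals that meet in a single point abut at it. -/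
lemma endpoints_of_Icc_inter_Icc_eq_singleton {a b a' b' x : ℝ} (hab : a < b) (hab' : a' < b')
    (h : Icc a b ∩ Icc a' b' = {x}) : (a = x ∧ b' = x) ∨ (b = x ∧ a' = x) := by
  rw [Icc_inter_Icc, Icc_eq_singleton_iff] at h
  obtain ⟨h1, h2⟩ := h
  rcases max_choice a a' with e | e <;> rcases min_choice b b' with f | f <;>
    simp only [e, f] at h1 h2 <;> first | exact Or.inl ⟨h1, h2⟩ | exact Or.inr ⟨h2, h1⟩ | linarith

lemma Rect.inter_eq_vseg {A B : Rect} {x c d : ℝ} (hcd : c < d)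
    (h : A.toSet ∩ B.toSet = vseg x c d) :
    (A.x1 = x ∧ B.x2 = x) ∨ (A.x2 = x ∧ B.x1 = x) := by
  have hne : (vseg x c d).Nonempty := ⟨(x, c), rfl, le_rfl, hcd.le⟩
  unfold Rect.toSet vseg at *
  rw [prod_inter_prod] at h
  exact endpoints_of_Icc_inter_Icc_eq_singleton A.hx B.hx
    ((prod_eq_prod_iff_of_nonempty (h ▸ hne)).1 h).1

lemma Rect.inter_eq_hseg {A B : Rect} {a b y : ℝ} (hab : a < b)
    (h : A.toSet ∩ B.toSet = hseg a b y) :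
    (A.y1 = y ∧ B.y2 = y) ∨ (A.y2 = y ∧ B.y1 = y) := by
  have hne : (hseg a b y).Nonempty := ⟨(a, y), ⟨le_rfl, hab.le⟩, rfl⟩
  unfold Rect.toSet hseg at *
  rw [prod_inter_prod] at h
  exact endpoints_of_Icc_inter_Icc_eq_singleton A.hy B.hy
    ((prod_eq_prod_iff_of_nonempty (h ▸ hne)).1 h).2

lemma Rect.bounds_of_subset_s4 {A B : Rect} (h : A.toSet ⊆ B.toSet) :
    B.x1 ≤ A.x1 ∧ A.x2 ≤ B.x2 ∧ B.y1 ≤ A.y1 ∧ A.y2 ≤ B.y2 := by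
  have h1 : (A.x1, A.y1) ∈ B.toSet := h ⟨⟨le_rfl, A.hx.le⟩, ⟨le_rfl, A.hy.le⟩⟩
  have h2 : (A.x2, A.y2) ∈ B.toSet := h ⟨⟨A.hx.le, le_rfl⟩, ⟨A.hy.le, le_rfl⟩⟩
  exact ⟨h1.1.1, h2.1.2, h1.2.1, h2.2.2⟩

/-- In a side-attachment sequence, for `2 ≤ j < k` (0-based: `1 ≤ j < k`),
if the attachment segments `s_j = R_j ∩ U_{j-1}` and `s_k = R_k ∩ U_{k-1}` are both
vertical then their x-coordinates differ, and if both horizontal then their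
y-coordinates differ; so a later segment never collinearly extends an earlier one. -/
theorem sideAttachSeq_segments_not_collinear
    {n : ℕ} (R : Fin n → Rect) (h : SideAttachSeq R) (j k : Fin n)
    (hj : 1 ≤ (j : ℕ)) (hjk : j < k)
    (Uj Uk : Rect)
    (hUj : (⋃ i ∈ Set.Iio j, (R i).toSet) = Uj.toSet)
    (hUk : (⋃ i ∈ Set.Iio k, (R i).toSet) = Uk.toSet) :
    (∀ x c d x' c' d' : ℝ, c < d → c' < d' →
        (R j).toSet ∩ Uj.toSet = vseg x c d →
        (R k).toSet ∩ Uk.toSet = vseg x' c' d' → x ≠ x') ∧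
    (∀ a b y a' b' y' : ℝ, a < b → a' < b' →
        (R j).toSet ∩ Uj.toSet = hseg a b y →
        (R k).toSet ∩ Uk.toSet = hseg a' b' y' → y ≠ y') := by
  have hR : (R j).toSet ⊆ Uk.toSet := by
    rw [← hUk]
    exact subset_biUnion_of_mem (u := fun i => (R i).toSet) (mem_Iio.2 hjk)
  have hU : Uj.toSet ⊆ Uk.toSet := by
    rw [← hUj, ← hUk]
    exact biUnion_subset_biUnion_left (Iio_subset_Iio hjk.le)
  obtain ⟨r1, r2, r3, r4⟩ := Rect.bounds_of_subset_s4 hR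
  obtain ⟨u1, u2, u3, u4⟩ := Rect.bounds_of_subset_s4 hU
  constructor
  · rintro x c d x' c' d' hcd hcd' hs hs' rfl
    have := (R j).hx
    have := Uj.hx
    rcases Rect.inter_eq_vseg hcd hs with ⟨e1, e2⟩ | ⟨e1, e2⟩ <;>
      rcases Rect.inter_eq_vseg hcd' hs' with ⟨f1, f2⟩ | ⟨f1, f2⟩ <;> linarith
  · rintro a b y a' b' y' hab hab' hs hs' rfl
    have := (R j).hy
    have := Uj.hy
    rcases Rect.inter_eq_hseg hab hs with ⟨e1, e2⟩ | ⟨e1, e2⟩ <;>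
      rcases Rect.inter_eq_hseg hab' hs' with ⟨f1, f2⟩ | ⟨f1, f2⟩ <;> linarith
end
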